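/- Let 1 < p < ∞ and N > 0. There exists a constant C such that for every continuous Littlewood–Paley family (f_i)_{i∈ℤ} with band width N, every jump collection (N_k)_{k≥0}, and every λ > 0, one has ‖ λ · (#{k ≥ 1 : |Σ_{N_{k−1}(x) < i ≤ N_k(x)} f_i(x)| > λ})^{1/2} ‖_{L^p(dx)} ≤ C ‖ (Σ_{i∈ℤ} |f_i|^2)^{1/2} ‖_{L^p(ℝ)}. -/

import Mathlib

open MeasureTheory ENNReal
open scoped FourierTransform NNReal

noncomputable section

/-- A jump collection: a sequence of measurable integer-valued functions on `ℝ`,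
nondecreasing in the index. -/
def IsJumpCollection (Nk : ℕ → ℝ → ℤ) : Prop :=
  (∀ k, Measurable (Nk k)) ∧ ∀ (k : ℕ) (x : ℝ), Nk k x ≤ Nk (k + 1) x

/-- A continuous Littlewood–Paley family with band width `Nb`. -/
def IsContLPFamily (Nb : ℝ) (f : ℤ → SchwartzMap ℝ ℂ) : Prop :=
  ∀ i : ℤ, ∀ ξ : ℝ, 𝓕 (⇑(f i)) ξ ≠ 0 →
    (2 : ℝ) ^ ((i : ℝ) - Nb) < |ξ| ∧ |ξ| < (2 : ℝ) ^ ((i : ℝ) + Nb)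

/-!
Restrict the indices to a finite window, let `F = ∑ i, f i`, and let `E m F` be the average of `F`
over the dyadic intervals of length `2 ^ (-m)`. The partial sums `∑ i ≤ m, f i` are close to the
martingale `E m F`: cancellation in `E m (f i)` for `m < i` and smoothness of `f i` for `i ≤ m`
bound the contribution of `f i` to the difference by `2 ^ (-ε |m - i|)` times an average of `f i`
at scale `2 ^ (-min m i)`. Summing over `i` by Schur's test and applying Stein's vector-valued
inequality, the `L^p` norm of the square function `(∑ m, |∑ i ≤ m, f i - E m F| ^ 2) ^ (1 / 2)` of
the errors is at most a constant times that of `(∑ i, |f i| ^ 2) ^ (1 / 2)`. The same bound follows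
for the square function of the martingale, whose differences are the `f i` up to errors.

A jump of the partial sums is a jump of the martingale up to these errors, so it remains to count
the jumps of `E m F`. Let `Y n` be the sum of the squares of the greedily selected jumps up to time
`n`, plus the square of the displacement `v` since the last selection. For the next difference `d`,
`Y (n + 1) - Y n = |d| ^ 2 + 2 ⟪v, d⟫`. Exchanging the two halves of each dyadic interval preserves
Lebesgue measure and the past and reverses the sign of `d`, hence of the cross term, and this
bounds the moments of `Y` by those of `∑ |d| ^ 2` directly. The estimates do not depend on the
window, which grows to `ℤ` by Fatou's lemma.
-/

section GreedyJumps

variable {E : Type*} [NormedAddCommGroup E]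

/-- Greedy selection of the jumps larger than `θ` of the sequence with increments `d`. The state
after `n` steps is the displacement since the last selected time together with the sum of the
squared sizes of the jumps selected so far. -/
def greedyJump (θ : ℝ) (d : ℕ → E) : ℕ → E × ℝ
  | 0 => (0, 0)
  | n + 1 =>
    if θ < ‖(greedyJump θ d n).1 + d n‖ then
      (0, (greedyJump θ d n).2 + ‖(greedyJump θ d n).1 + d n‖ ^ 2)
    else ((greedyJump θ d n).1 + d n, (greedyJump θ d n).2)

/-- The sum of the squared sizes of the greedily selected jumps, including the squared
displacement of the jump still in progress. -/
def greedyEnergy (θ : ℝ) (d : ℕ → E) (n : ℕ) : ℝ :=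
  ‖(greedyJump θ d n).1‖ ^ 2 + (greedyJump θ d n).2

variable {θ : ℝ} {d : ℕ → E}

lemma greedyEnergy_zero : greedyEnergy θ d 0 = 0 := by
  simp [greedyEnergy, greedyJump]

lemma greedyEnergy_succ (n : ℕ) :
    greedyEnergy θ d (n + 1) = ‖(greedyJump θ d n).1 + d n‖ ^ 2 + (greedyJump θ d n).2 := by
  simp only [greedyEnergy, greedyJump]
  split_ifs
  · simp [add_comm]
  · rfl

lemma greedyJump_congr {e : ℕ → E} {n : ℕ} (h : ∀ i < n, e i = d i) :
    greedyJump θ e n = greedyJump θ d n := by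
  induction n with
  | zero => rfl
  | succ n ih =>
    rw [greedyJump, greedyJump, ih fun i hi => h i (hi.trans n.lt_succ_self), h n n.lt_succ_self]

lemma monotone_greedyJump_snd : Monotone fun n => (greedyJump θ d n).2 := by
  refine monotone_nat_of_le_succ fun n => ?_
  simp only [greedyJump]
  split_ifs
  · exact le_add_of_nonneg_right (sq_nonneg _)
  · exact le_rfl

lemma greedyJump_snd_nonneg (n : ℕ) : 0 ≤ (greedyJump θ d n).2 :=
  monotone_greedyJump_snd n.zero_le

lemma greedyEnergy_nonneg (n : ℕ) : 0 ≤ greedyEnergy θ d n :=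
  add_nonneg (sq_nonneg _) (greedyJump_snd_nonneg n)

lemma norm_greedyJump_fst_le (hθ : 0 ≤ θ) (n : ℕ) : ‖(greedyJump θ d n).1‖ ≤ θ := by
  cases n with
  | zero => simpa [greedyJump] using hθ
  | succ n =>
    rw [greedyJump]
    split_ifs with h
    · simpa using hθ
    · exact not_lt.mp h

lemma greedyJump_fst_eq_or_add_sq_le_snd (hθ : 0 ≤ θ) {a b : ℕ} (hab : a ≤ b) :
    (greedyJump θ d b).1 = (greedyJump θ d a).1 + ∑ i ∈ Finset.Ico a b, d i ∨
      (greedyJump θ d a).2 + θ ^ 2 ≤ (greedyJump θ d b).2 := by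
  induction b, hab using Nat.le_induction with
  | base => simp
  | succ b hab ih =>
    by_cases h : θ < ‖(greedyJump θ d b).1 + d b‖
    · right
      rw [greedyJump, if_pos h]
      have hmono := monotone_greedyJump_snd (θ := θ) (d := d) hab
      dsimp only at hmono ⊢
      gcongr
    · rw [greedyJump, if_neg h, Finset.sum_Ico_succ_top hab, ← add_assoc]
      exact ih.imp_left fun h => by rw [h]

lemma greedyJump_snd_add_sq_le (hθ : 0 ≤ θ) {a b : ℕ} (hab : a ≤ b)
    (h : 2 * θ < ‖∑ i ∈ Finset.Ico a b, d i‖) :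
    (greedyJump θ d a).2 + θ ^ 2 ≤ (greedyJump θ d b).2 := by
  refine (greedyJump_fst_eq_or_add_sq_le_snd hθ hab).resolve_left fun heq => h.not_ge ?_
  have ha := norm_greedyJump_fst_le (d := d) hθ a
  have hb := norm_greedyJump_fst_le (d := d) hθ b
  calc ‖∑ i ∈ Finset.Ico a b, d i‖ = ‖(greedyJump θ d b).1 - (greedyJump θ d a).1‖ := by
        rw [heq, add_sub_cancel_left]
    _ ≤ 2 * θ := (norm_sub_le _ _).trans (by linarith)

theorem sq_mul_card_jumps_le_greedyEnergy (hθ : 0 ≤ θ) {n : ℕ} {t : ℕ → ℕ} (ht : Monotone t)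
    (htn : ∀ k, t k ≤ n) {J : Finset ℕ}
    (hJ : ∀ k ∈ J, 2 * θ < ‖∑ i ∈ Finset.Ico (t k) (t (k + 1)), d i‖) :
    θ ^ 2 * J.card ≤ greedyEnergy θ d n := by
  have hcount (K : ℕ) : θ ^ 2 * (J.filter (· < K)).card ≤ (greedyJump θ d (t K)).2 := by
    induction K with
    | zero => simpa using greedyJump_snd_nonneg (t 0)
    | succ K ih =>
      simp only [Nat.lt_succ_iff_lt_or_eq, Finset.filter_or, Finset.filter_eq']
      by_cases hK : K ∈ J
      · have hjump := greedyJump_snd_add_sq_le hθ (ht K.le_succ) (hJ K hK)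
        rw [if_pos hK, Finset.union_singleton, Finset.card_insert_of_notMem (by simp)]
        push_cast
        linarith
      · rw [if_neg hK, Finset.union_empty]
        exact ih.trans (monotone_greedyJump_snd (ht K.le_succ))
  obtain ⟨K, hK⟩ := J.exists_nat_subset_range
  have hfilter : J.filter (· < K) = J :=
    Finset.filter_true_of_mem fun k hk => Finset.mem_range.mp (hK hk)
  calc θ ^ 2 * J.card ≤ (greedyJump θ d (t K)).2 := by simpa only [hfilter] using hcount K
    _ ≤ (greedyJump θ d n).2 := monotone_greedyJump_snd (htn K)
    _ ≤ greedyEnergy θ d n := le_add_of_nonneg_left (sq_nonneg _)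

lemma measurable_greedyJump {Ω : Type*} [MeasurableSpace Ω] [MeasurableSpace E] [BorelSpace E]
    [SecondCountableTopology E] {D : ℕ → Ω → E} (hD : ∀ i, Measurable (D i)) (n : ℕ) :
    Measurable fun x => greedyJump θ (fun i => D i x) n := by
  induction n with
  | zero => exact measurable_const
  | succ n ih =>
    have hfst : Measurable fun x => (greedyJump θ (fun i => D i x) n).1 + D n x :=
      ih.fst.add (hD n)
    exact Measurable.ite (measurableSet_lt measurable_const hfst.norm)
      (measurable_const.prodMk (ih.snd.add (hfst.norm.pow_const 2))) (hfst.prodMk ih.snd)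

lemma measurable_greedyEnergy {Ω : Type*} [MeasurableSpace Ω] [MeasurableSpace E] [BorelSpace E]
    [SecondCountableTopology E] {D : ℕ → Ω → E} (hD : ∀ i, Measurable (D i)) (n : ℕ) :
    Measurable fun x => greedyEnergy θ (fun i => D i x) n :=
  ((measurable_greedyJump hD n).fst.norm.pow_const 2).add (measurable_greedyJump hD n).snd

open scoped InnerProductSpace in
lemma exists_greedyEnergy_flip [InnerProductSpace ℝ E] {e : ℕ → E} {n : ℕ}
    (he : ∀ i < n, e i = d i) (hen : e n = -d n) :
    ∃ u : ℝ, u ^ 2 ≤ 4 * greedyEnergy θ d n * ‖d n‖ ^ 2 ∧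
      greedyEnergy θ d (n + 1) = greedyEnergy θ d n + ‖d n‖ ^ 2 + u ∧
      greedyEnergy θ e (n + 1) = greedyEnergy θ d n + ‖d n‖ ^ 2 - u := by
  set v := (greedyJump θ d n).1 with hv
  refine ⟨2 * ⟪v, d n⟫_ℝ, ?_, ?_, ?_⟩
  · have hcs : ⟪v, d n⟫_ℝ ^ 2 ≤ (‖v‖ * ‖d n‖) ^ 2 :=
      sq_le_sq.mpr ((abs_real_inner_le_norm _ _).trans (le_abs_self _))
    have hle : ‖v‖ ^ 2 ≤ greedyEnergy θ d n := le_add_of_nonneg_right (greedyJump_snd_nonneg n)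
    calc (2 * ⟪v, d n⟫_ℝ) ^ 2 = 4 * ⟪v, d n⟫_ℝ ^ 2 := by ring
      _ ≤ 4 * (‖v‖ * ‖d n‖) ^ 2 := by gcongr
      _ = 4 * ‖v‖ ^ 2 * ‖d n‖ ^ 2 := by ring
      _ ≤ 4 * greedyEnergy θ d n * ‖d n‖ ^ 2 := by gcongr
  · rw [greedyEnergy_succ, greedyEnergy, ← hv, norm_add_sq_real]
    ring
  · rw [greedyEnergy_succ, greedyJump_congr he, hen, greedyEnergy, ← hv, ← sub_eq_add_neg,
      norm_sub_sq_real]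
    ring

end GreedyJumps

section PowerInequalities

variable {q x y : ℝ}

lemma rpow_sub_rpow_le_mul_sub (hq : 1 ≤ q) (hx : 0 ≤ x) (hy : 0 ≤ y) :
    x ^ q - y ^ q ≤ q * x ^ (q - 1) * (x - y) := by
  rcases hx.eq_or_lt with rfl | hx
  · rw [Real.zero_rpow (by linarith)]
    rcases hq.eq_or_lt with rfl | hq
    · simp
    · rw [Real.zero_rpow (by linarith)]
      simpa using Real.rpow_nonneg hy q
  · have hbern : 1 + q * (y / x - 1) ≤ (1 + (y / x - 1)) ^ q :=
      one_add_mul_self_le_rpow_one_add (by linarith [div_nonneg hy hx.le]) hq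
    rw [add_sub_cancel, Real.div_rpow hy hx.le, le_div_iff₀ (by positivity)] at hbern
    have hpow : x ^ q = x ^ (q - 1) * x := by
      rw [← Real.rpow_add_one hx.ne', sub_add_cancel]
    have hexpand : (1 + q * (y / x - 1)) * x ^ q = x ^ q - q * x ^ (q - 1) * (x - y) := by
      rw [hpow]
      field_simp
      ring
    linarith

lemma mul_sub_le_rpow_sub_rpow (hq0 : 0 ≤ q) (hq : q ≤ 1) (hy : 0 ≤ y) (hyx : y ≤ x) :
    q * x ^ (q - 1) * (x - y) ≤ x ^ q - y ^ q := by
  rcases (hy.trans hyx).eq_or_lt with rfl | hx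
  · simp [le_antisymm hyx hy]
  · have hbern : (1 + (y / x - 1)) ^ q ≤ 1 + q * (y / x - 1) :=
      rpow_one_add_le_one_add_mul_self (by linarith [div_nonneg hy hx.le]) hq0 hq
    rw [add_sub_cancel, Real.div_rpow hy hx.le, div_le_iff₀ (by positivity)] at hbern
    have hpow : x ^ q = x ^ (q - 1) * x := by
      rw [← Real.rpow_add_one hx.ne', sub_add_cancel]
    have hexpand : (1 + q * (y / x - 1)) * x ^ q = x ^ q - q * x ^ (q - 1) * (x - y) := by
      rw [hpow]
      field_simp
      ring
    linarith

variable {a δ u : ℝ}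

lemma abs_le_add_of_sq_le (ha : 0 ≤ a) (hδ : 0 ≤ δ) (hu : u ^ 2 ≤ 4 * a * δ) :
    |u| ≤ a + δ :=
  abs_le_of_sq_le_sq (by nlinarith [sq_nonneg (a - δ)]) (by positivity)

lemma mul_rpow_sub_rpow_le (hq : 1 ≤ q) (ha : 0 ≤ a) (hδ : 0 ≤ δ) (hu0 : 0 ≤ u)
    (hu : u ^ 2 ≤ 4 * a * δ) :
    u * ((a + 2 * δ + u) ^ (q - 1) - (a + 2 * δ - u) ^ (q - 1)) ≤
      8 * q * (2 * (a + 2 * δ)) ^ (q - 1) * δ := by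
  obtain ⟨-, hub⟩ := abs_le.mp (abs_le_add_of_sq_le ha hδ hu)
  obtain ⟨b, rfl⟩ : ∃ b, a = b - 2 * δ := ⟨a + 2 * δ, by ring⟩
  simp only [sub_add_cancel]
  have hb : 0 ≤ b := by linarith
  rcases hb.eq_or_lt with rfl | hb
  · obtain rfl : u = 0 := by linarith
    simpa using mul_nonneg (by positivity) hδ
  have hpow {x : ℝ} (hx : 0 ≤ x) : x ^ q = x ^ (q - 1) * x := by
    rw [← Real.rpow_add_one' hx (by linarith), sub_add_cancel]
  have hbu : 0 ≤ b - u := by linarith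
  have hgrad := rpow_sub_rpow_le_mul_sub hq (add_nonneg hb.le hu0) hbu
  have hdiff : b * ((b + u) ^ (q - 1) - (b - u) ^ (q - 1)) ≤ q * (b + u) ^ (q - 1) * (2 * u) := by
    have hcross : 0 ≤ u * ((b + u) ^ (q - 1) + (b - u) ^ (q - 1)) := by positivity
    rw [hpow hbu, hpow (add_nonneg hb.le hu0)] at hgrad
    linarith
  have hmono : (b + u) ^ (q - 1) ≤ (2 * b) ^ (q - 1) :=
    Real.rpow_le_rpow (by positivity) (by linarith) (by linarith)
  refine le_of_mul_le_mul_left ?_ hb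
  calc b * (u * ((b + u) ^ (q - 1) - (b - u) ^ (q - 1)))
      = u * (b * ((b + u) ^ (q - 1) - (b - u) ^ (q - 1))) := by ring
    _ ≤ u * (q * (b + u) ^ (q - 1) * (2 * u)) := by gcongr
    _ ≤ u * (q * (2 * b) ^ (q - 1) * (2 * u)) := by gcongr
    _ = 2 * q * (2 * b) ^ (q - 1) * u ^ 2 := by ring
    _ ≤ 2 * q * (2 * b) ^ (q - 1) * (4 * b * δ) := by gcongr; nlinarith
    _ = b * (8 * q * (2 * b) ^ (q - 1) * δ) := by ring

lemma add_rpow_add_sub_rpow_le (hq : 1 ≤ q) (ha : 0 ≤ a) (hδ : 0 ≤ δ)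
    (hu : u ^ 2 ≤ 4 * a * δ) :
    (a + 2 * δ + u) ^ q + (a + 2 * δ - u) ^ q ≤
      2 * (a ^ q + (2 * q + 4 * q ^ 2) * (2 * (a + 2 * δ)) ^ (q - 1) * δ) := by
  wlog hu0 : 0 ≤ u generalizing u
  · have := this (u := -u) (by rwa [neg_sq]) (by linarith)
    rwa [← sub_eq_add_neg, sub_neg_eq_add, add_comm] at this
  obtain ⟨-, hub⟩ := abs_le.mp (abs_le_add_of_sq_le ha hδ hu)
  have hmono {v : ℝ} (hv : 0 ≤ a + 2 * δ + v) (hv' : v ≤ a + 2 * δ) :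
      (a + 2 * δ + v) ^ (q - 1) ≤ (2 * (a + 2 * δ)) ^ (q - 1) :=
    Real.rpow_le_rpow hv (by linarith) (by linarith)
  have hplus := rpow_sub_rpow_le_mul_sub hq (x := a + 2 * δ + u) (by positivity) ha
  have hminus := rpow_sub_rpow_le_mul_sub hq (x := a + 2 * δ - u) (by linarith) ha
  have hsum : (a + 2 * δ + u) ^ (q - 1) + (a + 2 * δ - u) ^ (q - 1) ≤
      2 * (2 * (a + 2 * δ)) ^ (q - 1) := by
    rw [two_mul (_ ^ _)]
    exact add_le_add (hmono (by positivity) (by linarith))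
      (hmono (v := -u) (by linarith) (by linarith))
  have hcross := mul_rpow_sub_rpow_le hq ha hδ hu0 hu
  calc (a + 2 * δ + u) ^ q + (a + 2 * δ - u) ^ q
      ≤ 2 * a ^ q + 2 * q * δ * ((a + 2 * δ + u) ^ (q - 1) + (a + 2 * δ - u) ^ (q - 1)) +
          q * (u * ((a + 2 * δ + u) ^ (q - 1) - (a + 2 * δ - u) ^ (q - 1))) := by linarith
    _ ≤ 2 * a ^ q + 2 * q * δ * (2 * (2 * (a + 2 * δ)) ^ (q - 1)) +
          q * (8 * q * (2 * (a + 2 * δ)) ^ (q - 1) * δ) :=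
        add_le_add (by gcongr) (mul_le_mul_of_nonneg_left hcross (by positivity))
    _ = _ := by ring

lemma two_mul_rpow_le_add_rpow_add_sub_rpow {α c : ℝ} (hα : 0 ≤ α) (hc : 0 ≤ c)
    (hx : 0 ≤ x) (hy : 0 ≤ y) (hcxy : c ^ 2 ≤ x * y) : 2 * c ^ α ≤ x ^ α + y ^ α := by
  refine le_of_sq_le_sq ?_ (by positivity)
  have hpow : (c ^ α) ^ 2 ≤ x ^ α * y ^ α := by
    rw [← Real.mul_rpow hx hy, ← Real.rpow_natCast, ← Real.rpow_mul hc, mul_comm,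
      Real.rpow_mul hc, Real.rpow_natCast]
    exact Real.rpow_le_rpow (sq_nonneg c) hcxy hα
  nlinarith [sq_nonneg (x ^ α - y ^ α)]

lemma two_mul_mul_rpow_le {α s : ℝ} (hα : 0 ≤ α) (ha : 0 ≤ a) (hδ : 0 ≤ δ) (hs : 0 ≤ s)
    (hu : u ^ 2 ≤ 4 * a * δ) :
    2 * (s * a ^ α + δ * ((a + 2 * δ) / 2) ^ α) ≤
      (s + δ) * (a + 2 * δ + u) ^ α + (s + δ) * (a + 2 * δ - u) ^ α := by
  obtain ⟨hlow, hupp⟩ := abs_le.mp (abs_le_add_of_sq_le ha hδ hu)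
  have hgeom {c : ℝ} (hc : 0 ≤ c) (hcb : c ^ 2 ≤ a ^ 2 + 4 * δ ^ 2) :
      2 * c ^ α ≤ (a + 2 * δ + u) ^ α + (a + 2 * δ - u) ^ α :=
    two_mul_rpow_le_add_rpow_add_sub_rpow hα hc (by linarith) (by linarith) (by linarith)
  have ha' := mul_le_mul_of_nonneg_left (hgeom ha (by nlinarith)) hs
  have hb' := mul_le_mul_of_nonneg_left
    (hgeom (c := (a + 2 * δ) / 2) (by positivity) (by nlinarith [sq_nonneg (a - 2 * δ)])) hδ
  linarith

end PowerInequalities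

lemma le_rpow_mul_of_le_mul_rpow_mul_rpow {I R C : ℝ≥0∞} {t : ℝ} (ht0 : 0 < t) (ht1 : t ≤ 1)
    (hI : I ≠ ∞) (h : I ≤ C * (R ^ t * I ^ (1 - t))) : I ≤ C ^ (1 / t) * R := by
  rcases eq_or_ne I 0 with rfl | h0
  · exact zero_le
  have hI0 : I ^ (1 - t) ≠ 0 := by simp [ENNReal.rpow_eq_zero_iff, h0, hI]
  have hItop : I ^ (1 - t) ≠ ∞ := ENNReal.rpow_ne_top_of_nonneg (by linarith) hI
  have hcancel : I ^ t ≤ C * R ^ t := by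
    rw [← ENNReal.mul_le_mul_iff_left hI0 hItop, ← ENNReal.rpow_add _ _ h0 hI, mul_assoc]
    simpa using h
  calc I = (I ^ t) ^ (1 / t) := by rw [← ENNReal.rpow_mul, mul_one_div_cancel ht0.ne', rpow_one]
    _ ≤ (C * R ^ t) ^ (1 / t) := ENNReal.rpow_le_rpow hcancel (by positivity)
    _ = C ^ (1 / t) * R := by
      rw [ENNReal.mul_rpow_of_nonneg _ _ (by positivity), ← ENNReal.rpow_mul,
        mul_one_div_cancel ht0.ne', rpow_one]

section FlipEnergy

variable {Ω : Type*} [MeasurableSpace Ω] {μ : Measure Ω}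

lemma lintegral_ofReal_le_of_add_comp_le {τ : Ω → Ω} (hτ : MeasurePreserving τ μ μ)
    {h k : Ω → ℝ} (hh : Measurable h) (h0 : ∀ x, 0 ≤ h x) (hle : ∀ x, h x + h (τ x) ≤ 2 * k x) :
    ∫⁻ x, ENNReal.ofReal (h x) ∂μ ≤ ∫⁻ x, ENNReal.ofReal (k x) ∂μ := by
  refine (ENNReal.mul_le_mul_iff_right two_ne_zero ofNat_ne_top).mp ?_
  calc 2 * ∫⁻ x, ENNReal.ofReal (h x) ∂μ
      = ∫⁻ x, ENNReal.ofReal (h x) + ENNReal.ofReal (h (τ x)) ∂μ := by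
        rw [two_mul, lintegral_add_left hh.ennreal_ofReal, hτ.lintegral_comp hh.ennreal_ofReal]
    _ ≤ ∫⁻ x, 2 * ENNReal.ofReal (k x) ∂μ := lintegral_mono fun x => by
        rw [← ENNReal.ofReal_add (h0 _) (h0 _), ← ENNReal.ofReal_ofNat,
          ← ENNReal.ofReal_mul zero_le_two]
        exact ENNReal.ofReal_le_ofReal (hle x)
    _ = 2 * ∫⁻ x, ENNReal.ofReal (k x) ∂μ := lintegral_const_mul' _ _ ofNat_ne_top

lemma lintegral_ofReal_le_of_le_add_comp {τ : Ω → Ω} (hτ : MeasurePreserving τ μ μ)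
    {h k : Ω → ℝ} (hh : Measurable h) (hle : ∀ x, 2 * k x ≤ h x + h (τ x)) :
    ∫⁻ x, ENNReal.ofReal (k x) ∂μ ≤ ∫⁻ x, ENNReal.ofReal (h x) ∂μ := by
  refine (ENNReal.mul_le_mul_iff_right two_ne_zero ofNat_ne_top).mp ?_
  calc 2 * ∫⁻ x, ENNReal.ofReal (k x) ∂μ
      = ∫⁻ x, 2 * ENNReal.ofReal (k x) ∂μ := (lintegral_const_mul' _ _ ofNat_ne_top).symm
    _ ≤ ∫⁻ x, ENNReal.ofReal (h x) + ENNReal.ofReal (h (τ x)) ∂μ := lintegral_mono fun x => by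
        rw [← ENNReal.ofReal_ofNat, ← ENNReal.ofReal_mul zero_le_two]
        exact (ENNReal.ofReal_le_ofReal (hle x)).trans ENNReal.ofReal_add_le
    _ = 2 * ∫⁻ x, ENNReal.ofReal (h x) ∂μ := by
        rw [two_mul, lintegral_add_left hh.ennreal_ofReal, hτ.lintegral_comp hh.ennreal_ofReal]

/-- A nonnegative process `Y` with steps `Y (n + 1) - Y n = δ n ± u`, where `u ^ 2 ≤ 4 * Y n * δ n`
and the sign of `u` is reversed by a measure preserving flip `σ n` fixing `Y n` and `δ 0, …, δ n`.
This is all that the moment bounds need to know about the squared deviations of a dyadic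
martingale with squared differences `δ`. -/
structure IsFlipEnergy (μ : Measure Ω) (σ : ℕ → Ω → Ω) (Y δ : ℕ → Ω → ℝ) : Prop where
  measurePreserving (n : ℕ) : MeasurePreserving (σ n) μ μ
  measurable (n : ℕ) : Measurable (Y n)
  nonneg (n : ℕ) (x : Ω) : 0 ≤ Y n x
  zero (x : Ω) : Y 0 x = 0
  measurable_step (n : ℕ) : Measurable (δ n)
  step_nonneg (n : ℕ) (x : Ω) : 0 ≤ δ n x
  step_flip {i n : ℕ} (hin : i ≤ n) (x : Ω) : δ i (σ n x) = δ i x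
  exists_flip (n : ℕ) (x : Ω) : ∃ u : ℝ, u ^ 2 ≤ 4 * Y n x * δ n x ∧
    Y (n + 1) x = Y n x + δ n x + u ∧ Y (n + 1) (σ n x) = Y n x + δ n x - u

namespace IsFlipEnergy

variable {σ : ℕ → Ω → Ω} {Y δ : ℕ → Ω → ℝ} {q : ℝ}

lemma sum_step_nonneg (hY : IsFlipEnergy μ σ Y δ) (n : ℕ) (x : Ω) :
    0 ≤ ∑ i ∈ Finset.range n, δ i x :=
  Finset.sum_nonneg fun i _ => hY.step_nonneg i x

lemma measurable_sum_step (hY : IsFlipEnergy μ σ Y δ) (n : ℕ) :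
    Measurable fun x => ∑ i ∈ Finset.range n, δ i x :=
  Finset.measurable_fun_sum _ fun i _ => hY.measurable_step i

lemma sum_step_flip (hY : IsFlipEnergy μ σ Y δ) (n : ℕ) (x : Ω) :
    ∑ i ∈ Finset.range (n + 1), δ i (σ n x) = ∑ i ∈ Finset.range (n + 1), δ i x :=
  Finset.sum_congr rfl fun i hi => hY.step_flip (by simpa [Nat.lt_succ_iff] using hi) x

lemma eq_zero_of_sum_step_eq_zero (hY : IsFlipEnergy μ σ Y δ) {n : ℕ} {x : Ω}
    (h : ∑ i ∈ Finset.range n, δ i x = 0) : Y n x = 0 := by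
  induction n with
  | zero => exact hY.zero x
  | succ n ih =>
    rw [Finset.sum_range_succ,
      add_eq_zero_iff_of_nonneg (hY.sum_step_nonneg n x) (hY.step_nonneg n x)] at h
    obtain ⟨u, hu, hstep, -⟩ := hY.exists_flip n x
    rw [h.2, mul_zero] at hu
    rw [hstep, ih h.1, h.2, pow_eq_zero_iff two_ne_zero |>.mp (hu.antisymm (sq_nonneg u))]
    simp

lemma step_mul_sum_step_rpow_sub_one_le (hY : IsFlipEnergy μ σ Y δ) (hq0 : 0 < q) (hq1 : q ≤ 1)
    (n : ℕ) (x : Ω) :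
    δ n x * (∑ i ∈ Finset.range (n + 1), δ i x) ^ (q - 1) ≤
      1 / q * ((∑ i ∈ Finset.range (n + 1), δ i x) ^ q - (∑ i ∈ Finset.range n, δ i x) ^ q) := by
  have hsucc := Finset.sum_range_succ (δ · x) n
  rw [one_div, le_inv_mul_iff₀ hq0]
  have := mul_sub_le_rpow_sub_rpow (x := ∑ i ∈ Finset.range (n + 1), δ i x) hq0.le hq1
    (hY.sum_step_nonneg n x) (by linarith [hY.step_nonneg n x])
  rwa [hsucc, add_sub_cancel_left, mul_right_comm, mul_assoc, ← hsucc] at this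

lemma mul_sum_step_succ_rpow_sub_one_le (hY : IsFlipEnergy μ σ Y δ) (hq1 : q ≤ 1) (n : ℕ)
    (x : Ω) :
    Y n x * (∑ i ∈ Finset.range (n + 1), δ i x) ^ (q - 1) ≤
      Y n x * (∑ i ∈ Finset.range n, δ i x) ^ (q - 1) := by
  rcases (hY.sum_step_nonneg n x).eq_or_lt with h0 | h0
  · simp [hY.eq_zero_of_sum_step_eq_zero h0.symm]
  · refine mul_le_mul_of_nonneg_left (Real.rpow_le_rpow_of_nonpos h0 ?_ (by linarith))
      (hY.nonneg n x)
    linarith [Finset.sum_range_succ (δ · x) n, hY.step_nonneg n x]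

lemma lintegral_mul_rpow_sub_one_le (hY : IsFlipEnergy μ σ Y δ) (hq0 : 0 < q) (hq1 : q ≤ 1)
    (n : ℕ) :
    ∫⁻ x, ENNReal.ofReal (Y n x * (∑ i ∈ Finset.range n, δ i x) ^ (q - 1)) ∂μ ≤
      ∫⁻ x, ENNReal.ofReal (1 / q * (∑ i ∈ Finset.range n, δ i x) ^ q) ∂μ := by
  set s : ℕ → Ω → ℝ := fun n x => ∑ i ∈ Finset.range n, δ i x
  have hs (n x) : 0 ≤ s n x := hY.sum_step_nonneg n x
  have hs_meas (n) : Measurable (s n) := hY.measurable_sum_step n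
  have hs_succ (n x) : s (n + 1) x = s n x + δ n x := Finset.sum_range_succ (δ · x) n
  have hinc (n x) : 0 ≤ 1 / q * (s (n + 1) x ^ q - s n x ^ q) := by
    refine mul_nonneg (by positivity) (sub_nonneg.mpr (Real.rpow_le_rpow (hs n x) ?_ hq0.le))
    linarith [hs_succ n x, hY.step_nonneg n x]
  induction n with
  | zero => simp [hY.zero]
  | succ n ih =>
    calc ∫⁻ x, ENNReal.ofReal (Y (n + 1) x * s (n + 1) x ^ (q - 1)) ∂μ
        ≤ ∫⁻ x, ENNReal.ofReal (Y n x * s n x ^ (q - 1) +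
            1 / q * (s (n + 1) x ^ q - s n x ^ q)) ∂μ := by
          refine lintegral_ofReal_le_of_add_comp_le (hY.measurePreserving n)
            ((hY.measurable _).mul ((hs_meas _).pow_const _))
            (fun x => mul_nonneg (hY.nonneg _ x) (Real.rpow_nonneg (hs _ x) _)) fun x => ?_
          obtain ⟨u, -, hplus, hminus⟩ := hY.exists_flip n x
          have hflip : s (n + 1) (σ n x) = s (n + 1) x := hY.sum_step_flip n x
          have hY_le := hY.mul_sum_step_succ_rpow_sub_one_le hq1 n x
          have hδ_le := hY.step_mul_sum_step_rpow_sub_one_le hq0 hq1 n x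
          rw [hflip, hplus, hminus]
          linarith
      _ ≤ ∫⁻ x, ENNReal.ofReal (1 / q * s n x ^ q) +
            ENNReal.ofReal (1 / q * (s (n + 1) x ^ q - s n x ^ q)) ∂μ := by
          refine (lintegral_mono fun x => ENNReal.ofReal_add_le).trans ?_
          have := (hs_meas n).pow_const q
          have := (hs_meas (n + 1)).pow_const q
          rw [lintegral_add_right _ (by fun_prop), lintegral_add_right _ (by fun_prop)]
          gcongr
      _ = ∫⁻ x, ENNReal.ofReal (1 / q * s (n + 1) x ^ q) ∂μ := lintegral_congr fun x => by
          have := Real.rpow_nonneg (hs n x) q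
          rw [← ENNReal.ofReal_add (by positivity) (hinc n x)]
          ring_nf

theorem lintegral_rpow_le_of_le_one (hY : IsFlipEnergy μ σ Y δ) (hq0 : 0 < q) (hq1 : q ≤ 1)
    (n : ℕ) :
    ∫⁻ x, ENNReal.ofReal (Y n x) ^ q ∂μ ≤
      ENNReal.ofReal (1 / q) ^ q *
        ∫⁻ x, ENNReal.ofReal (∑ i ∈ Finset.range n, δ i x) ^ q ∂μ := by
  set s : Ω → ℝ := fun x => ∑ i ∈ Finset.range n, δ i x
  have hs (x) : 0 ≤ s x := hY.sum_step_nonneg n x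
  have hs_meas : Measurable s := hY.measurable_sum_step n
  have hY_meas := hY.measurable n
  have hfactor (x) : ENNReal.ofReal (Y n x) ^ q =
      ENNReal.ofReal (Y n x * s x ^ (q - 1)) ^ q * (ENNReal.ofReal (s x) ^ q) ^ (1 - q) := by
    rcases (hs x).eq_or_lt with h0 | h0
    · simp [hY.eq_zero_of_sum_step_eq_zero h0.symm, hq0]
    · rw [← ENNReal.rpow_mul, mul_comm q (1 - q), ENNReal.rpow_mul,
        ← ENNReal.mul_rpow_of_nonneg _ _ hq0.le, ENNReal.ofReal_rpow_of_pos h0,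
        ← ENNReal.ofReal_mul (mul_nonneg (hY.nonneg n x) (Real.rpow_nonneg h0.le _)), mul_assoc,
        ← Real.rpow_add h0]
      simp
  have hR : ∫⁻ x, ENNReal.ofReal (1 / q * s x ^ q) ∂μ =
      ENNReal.ofReal (1 / q) * ∫⁻ x, ENNReal.ofReal (s x) ^ q ∂μ := by
    rw [← lintegral_const_mul' _ _ ofReal_ne_top]
    refine lintegral_congr fun x => ?_
    rw [ENNReal.ofReal_mul (by positivity), ENNReal.ofReal_rpow_of_nonneg (hs x) hq0.le]
  calc ∫⁻ x, ENNReal.ofReal (Y n x) ^ q ∂μ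
      = ∫⁻ x, ENNReal.ofReal (Y n x * s x ^ (q - 1)) ^ q *
          (ENNReal.ofReal (s x) ^ q) ^ (1 - q) ∂μ := lintegral_congr hfactor
    _ ≤ (∫⁻ x, ENNReal.ofReal (Y n x * s x ^ (q - 1)) ∂μ) ^ q *
          (∫⁻ x, ENNReal.ofReal (s x) ^ q ∂μ) ^ (1 - q) :=
        ENNReal.lintegral_mul_norm_pow_le (by fun_prop) (by fun_prop) hq0.le (by linarith)
          (by ring)
    _ ≤ (ENNReal.ofReal (1 / q) * ∫⁻ x, ENNReal.ofReal (s x) ^ q ∂μ) ^ q *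
          (∫⁻ x, ENNReal.ofReal (s x) ^ q ∂μ) ^ (1 - q) := by
        gcongr
        exact (hY.lintegral_mul_rpow_sub_one_le hq0 hq1 n).trans_eq hR
    _ = _ := by
        rw [ENNReal.mul_rpow_of_nonneg _ _ hq0.le, mul_assoc,
          ← ENNReal.rpow_add_of_nonneg _ _ hq0.le (by linarith)]
        simp [s]

lemma add_sum_step_le (hY : IsFlipEnergy μ σ Y δ) (n : ℕ) (x : Ω) :
    Y n x + ∑ i ∈ Finset.range n, δ i x ≤ 3 * 2 ^ n * ∑ i ∈ Finset.range n, δ i x := by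
  induction n with
  | zero => simp [hY.zero]
  | succ n ih =>
    obtain ⟨u, hu, hstep, -⟩ := hY.exists_flip n x
    have hδ := hY.step_nonneg n x
    have hu_le := (abs_le.mp (abs_le_add_of_sq_le (hY.nonneg n x) hδ hu)).2
    have hpow : δ n x ≤ 2 ^ n * δ n x := le_mul_of_one_le_left hδ (one_le_pow₀ one_le_two)
    have hs := hY.sum_step_nonneg n x
    rw [hstep, Finset.sum_range_succ, pow_succ]
    linarith

lemma lintegral_add_sum_step_rpow_ne_top (hY : IsFlipEnergy μ σ Y δ) (hq : 0 ≤ q) (n : ℕ)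
    (hfin : ∫⁻ x, ENNReal.ofReal (∑ i ∈ Finset.range n, δ i x) ^ q ∂μ ≠ ∞) :
    ∫⁻ x, ENNReal.ofReal (Y n x + ∑ i ∈ Finset.range n, δ i x) ^ q ∂μ ≠ ∞ := by
  have hconst : ENNReal.ofReal (3 * 2 ^ n) ^ q ≠ ∞ := rpow_ne_top_of_nonneg hq ofReal_ne_top
  refine ne_top_of_le_ne_top (ENNReal.mul_ne_top hconst hfin) ?_
  rw [← lintegral_const_mul' _ _ hconst]
  refine lintegral_mono fun x => ?_
  rw [← ENNReal.mul_rpow_of_nonneg _ _ hq, ← ENNReal.ofReal_mul (by positivity)]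
  exact ENNReal.rpow_le_rpow (ENNReal.ofReal_le_ofReal (hY.add_sum_step_le n x)) hq

lemma lintegral_add_sum_step_succ_rpow_le (hY : IsFlipEnergy μ σ Y δ) (hq : 1 ≤ q) (n : ℕ) :
    ∫⁻ x, ENNReal.ofReal ((Y (n + 1) x + ∑ i ∈ Finset.range (n + 1), δ i x) ^ q) ∂μ ≤
      ∫⁻ x, ENNReal.ofReal ((Y n x + ∑ i ∈ Finset.range n, δ i x) ^ q +
        (2 * q + 4 * q ^ 2) * 4 ^ (q - 1) *
          (δ n x * ((Y n x + ∑ i ∈ Finset.range n, δ i x + 2 * δ n x) / 2) ^ (q - 1))) ∂μ := by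
  refine lintegral_ofReal_le_of_add_comp_le (hY.measurePreserving n)
    (((hY.measurable _).add (hY.measurable_sum_step _)).pow_const _)
    (fun x => Real.rpow_nonneg (add_nonneg (hY.nonneg _ x) (hY.sum_step_nonneg _ x)) _)
    fun x => ?_
  obtain ⟨u, hu, hplus, hminus⟩ := hY.exists_flip n x
  have hs := hY.sum_step_nonneg n x
  have hδ := hY.step_nonneg n x
  have hW : 0 ≤ Y n x + ∑ i ∈ Finset.range n, δ i x := add_nonneg (hY.nonneg n x) hs
  have hu' : u ^ 2 ≤ 4 * (Y n x + ∑ i ∈ Finset.range n, δ i x) * δ n x := by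
    nlinarith [mul_nonneg hs hδ]
  convert add_rpow_add_sub_rpow_le hq hW hδ hu' using 3
  · rw [hplus, Finset.sum_range_succ]; ring
  · rw [hY.sum_step_flip, hminus, Finset.sum_range_succ]; ring
  · rw [mul_comm (δ n x), ← mul_assoc, mul_assoc _ (4 ^ (q - 1)),
      ← Real.mul_rpow (by norm_num) (by linarith)]
    ring_nf

lemma lintegral_sum_step_mul_rpow_le_succ (hY : IsFlipEnergy μ σ Y δ) {α : ℝ} (hα : 0 ≤ α)
    (n : ℕ) :
    ∫⁻ x, ENNReal.ofReal ((∑ i ∈ Finset.range n, δ i x) *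
        (Y n x + ∑ i ∈ Finset.range n, δ i x) ^ α +
        δ n x * ((Y n x + ∑ i ∈ Finset.range n, δ i x + 2 * δ n x) / 2) ^ α) ∂μ ≤
      ∫⁻ x, ENNReal.ofReal ((∑ i ∈ Finset.range (n + 1), δ i x) *
        (Y (n + 1) x + ∑ i ∈ Finset.range (n + 1), δ i x) ^ α) ∂μ := by
  refine lintegral_ofReal_le_of_le_add_comp (hY.measurePreserving n)
    ((hY.measurable_sum_step _).mul
      (((hY.measurable _).add (hY.measurable_sum_step _)).pow_const _)) fun x => ?_
  obtain ⟨u, hu, hplus, hminus⟩ := hY.exists_flip n x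
  have hs := hY.sum_step_nonneg n x
  have hδ := hY.step_nonneg n x
  have hW : 0 ≤ Y n x + ∑ i ∈ Finset.range n, δ i x := add_nonneg (hY.nonneg n x) hs
  have hu' : u ^ 2 ≤ 4 * (Y n x + ∑ i ∈ Finset.range n, δ i x) * δ n x := by
    nlinarith [mul_nonneg hs hδ]
  convert two_mul_mul_rpow_le hα hW hδ hs hu' using 3
  · exact Finset.sum_range_succ (δ · x) n
  · rw [hplus, Finset.sum_range_succ]; ring_nf
  · rw [hY.sum_step_flip]
    exact Finset.sum_range_succ (δ · x) n
  · rw [hY.sum_step_flip, hminus, Finset.sum_range_succ]; ring_nf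

lemma lintegral_add_sum_step_rpow_le (hY : IsFlipEnergy μ σ Y δ) (hq : 1 ≤ q) (n : ℕ) :
    ∫⁻ x, ENNReal.ofReal ((Y n x + ∑ i ∈ Finset.range n, δ i x) ^ q) ∂μ ≤
      ENNReal.ofReal ((2 * q + 4 * q ^ 2) * 4 ^ (q - 1)) *
        ∫⁻ x, ENNReal.ofReal ((∑ i ∈ Finset.range n, δ i x) *
          (Y n x + ∑ i ∈ Finset.range n, δ i x) ^ (q - 1)) ∂μ := by
  set s : ℕ → Ω → ℝ := fun n x => ∑ i ∈ Finset.range n, δ i x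
  set K := (2 * q + 4 * q ^ 2) * 4 ^ (q - 1)
  have hK : 0 ≤ K := by positivity
  have hs (n x) : 0 ≤ s n x := hY.sum_step_nonneg n x
  have hs_meas (n) : Measurable (s n) := hY.measurable_sum_step n
  have hY_meas := hY.measurable
  have hY0 := hY.nonneg
  have hδ := hY.step_nonneg
  induction n with
  | zero => simp [hY.zero, show q ≠ 0 by linarith]
  | succ n ih =>
    calc ∫⁻ x, ENNReal.ofReal ((Y (n + 1) x + s (n + 1) x) ^ q) ∂μ
        ≤ ∫⁻ x, ENNReal.ofReal ((Y n x + s n x) ^ q) + ENNReal.ofReal (K * (δ n x *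
            ((Y n x + s n x + 2 * δ n x) / 2) ^ (q - 1))) ∂μ :=
          (hY.lintegral_add_sum_step_succ_rpow_le hq n).trans
            (lintegral_mono fun x => ENNReal.ofReal_add_le)
      _ ≤ ENNReal.ofReal K * ∫⁻ x, ENNReal.ofReal (s n x * (Y n x + s n x) ^ (q - 1)) ∂μ +
            ENNReal.ofReal K * ∫⁻ x, ENNReal.ofReal (δ n x *
              ((Y n x + s n x + 2 * δ n x) / 2) ^ (q - 1)) ∂μ := by
          rw [lintegral_add_left (by fun_prop)]
          simp_rw [ENNReal.ofReal_mul hK, lintegral_const_mul' _ _ ofReal_ne_top]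
          gcongr
      _ = ENNReal.ofReal K * ∫⁻ x, ENNReal.ofReal (s n x * (Y n x + s n x) ^ (q - 1) +
            δ n x * ((Y n x + s n x + 2 * δ n x) / 2) ^ (q - 1)) ∂μ := by
          rw [← mul_add, ← lintegral_add_left (by fun_prop)]
          refine congrArg _ (lintegral_congr fun x => ?_)
          have := hs n x
          have := hY0 n x
          have := hδ n x
          rw [ENNReal.ofReal_add (by positivity) (by positivity)]
      _ ≤ _ := mul_le_mul_right (hY.lintegral_sum_step_mul_rpow_le_succ (by linarith) n) _

theorem lintegral_rpow_le_of_one_le (hY : IsFlipEnergy μ σ Y δ) (hq : 1 ≤ q) (n : ℕ) :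
    ∫⁻ x, ENNReal.ofReal (Y n x) ^ q ∂μ ≤
      ENNReal.ofReal ((2 * q + 4 * q ^ 2) * 4 ^ (q - 1)) ^ q *
        ∫⁻ x, ENNReal.ofReal (∑ i ∈ Finset.range n, δ i x) ^ q ∂μ := by
  have hq0 : 0 < q := by linarith
  set s : Ω → ℝ := fun x => ∑ i ∈ Finset.range n, δ i x
  set K := (2 * q + 4 * q ^ 2) * 4 ^ (q - 1)
  have hK : 0 < K := by positivity
  have hs (x) : 0 ≤ s x := hY.sum_step_nonneg n x
  have hs_meas : Measurable s := hY.measurable_sum_step n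
  have hY_meas := hY.measurable n
  have hW (x) : 0 ≤ Y n x + s x := add_nonneg (hY.nonneg n x) (hs x)
  rcases eq_or_ne (∫⁻ x, ENNReal.ofReal (s x) ^ q ∂μ) ∞ with hfin | hfin
  · rw [hfin, ENNReal.mul_top (by simp [hK, ENNReal.rpow_eq_zero_iff])]
    exact le_top
  have hholder : ∫⁻ x, ENNReal.ofReal (s x * (Y n x + s x) ^ (q - 1)) ∂μ ≤
      (∫⁻ x, ENNReal.ofReal (s x) ^ q ∂μ) ^ (1 / q) *
        (∫⁻ x, ENNReal.ofReal (Y n x + s x) ^ q ∂μ) ^ (1 - 1 / q) := by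
    refine (lintegral_congr fun x => ?_).trans_le (ENNReal.lintegral_mul_norm_pow_le
      (by fun_prop) (by fun_prop) (by positivity) (by simpa using inv_le_one_of_one_le₀ hq)
      (by ring))
    rw [ENNReal.ofReal_mul (hs x), ← ENNReal.ofReal_rpow_of_nonneg (hW x) (by linarith),
      ← ENNReal.rpow_mul, ← ENNReal.rpow_mul, mul_sub, mul_one_div_cancel hq0.ne', mul_one,
      rpow_one]
  have hmoment : ∫⁻ x, ENNReal.ofReal (Y n x + s x) ^ q ∂μ ≤
      ENNReal.ofReal K * ((∫⁻ x, ENNReal.ofReal (s x) ^ q ∂μ) ^ (1 / q) *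
        (∫⁻ x, ENNReal.ofReal (Y n x + s x) ^ q ∂μ) ^ (1 - 1 / q)) := by
    simp_rw [ENNReal.ofReal_rpow_of_nonneg (hW _) hq0.le] at hholder ⊢
    exact (hY.lintegral_add_sum_step_rpow_le hq n).trans (mul_le_mul_right hholder _)
  calc ∫⁻ x, ENNReal.ofReal (Y n x) ^ q ∂μ ≤ ∫⁻ x, ENNReal.ofReal (Y n x + s x) ^ q ∂μ := by
        gcongr with x
        exact le_add_of_nonneg_right (hs x)
    _ ≤ ENNReal.ofReal K ^ (1 / (1 / q)) * ∫⁻ x, ENNReal.ofReal (s x) ^ q ∂μ :=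
        le_rpow_mul_of_le_mul_rpow_mul_rpow (by positivity)
          (by simpa using inv_le_one_of_one_le₀ hq)
          (hY.lintegral_add_sum_step_rpow_ne_top hq0.le n hfin) hmoment
    _ = _ := by rw [one_div_one_div]

theorem exists_lintegral_rpow_le (μ : Measure Ω) (hq : 0 < q) :
    ∃ C : ℝ≥0, ∀ (σ : ℕ → Ω → Ω) (Y δ : ℕ → Ω → ℝ), IsFlipEnergy μ σ Y δ → ∀ n : ℕ,
      ∫⁻ x, ENNReal.ofReal (Y n x) ^ q ∂μ ≤
        C * ∫⁻ x, ENNReal.ofReal (∑ i ∈ Finset.range n, δ i x) ^ q ∂μ := by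
  have hcoe (c : ℝ) : ((ENNReal.ofReal c ^ q).toNNReal : ℝ≥0∞) = ENNReal.ofReal c ^ q :=
    coe_toNNReal (rpow_ne_top_of_nonneg hq.le ofReal_ne_top)
  rcases le_total q 1 with hq1 | hq1
  · exact ⟨(ENNReal.ofReal (1 / q) ^ q).toNNReal, fun σ Y δ hY n => by
      rw [hcoe]
      exact hY.lintegral_rpow_le_of_le_one hq hq1 n⟩
  · exact ⟨(ENNReal.ofReal ((2 * q + 4 * q ^ 2) * 4 ^ (q - 1)) ^ q).toNNReal, fun σ Y δ hY n => by
      rw [hcoe]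
      exact hY.lintegral_rpow_le_of_one_le hq1 n⟩

end IsFlipEnergy

end FlipEnergy

section LayerCake

variable {Ω : Type*} [MeasurableSpace Ω] {μ : Measure Ω}

lemma setLIntegral_Ioi_rpow_eq_top (a : ℝ) :
    ∫⁻ s in Set.Ioi (0 : ℝ), ENNReal.ofReal (s ^ a) = ∞ := by
  by_contra h
  refine not_integrableOn_Ioi_rpow a ((lintegral_ofReal_ne_top_iff_integrable
    (by fun_prop) ?_).mp h)
  filter_upwards [ae_restrict_mem measurableSet_Ioi] with s hs using Real.rpow_nonneg hs.le a

lemma lintegral_rpow_eq_lintegral_meas_ofReal_lt_mul {g : Ω → ℝ≥0∞} (hg : Measurable g) {a : ℝ}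
    (ha : 0 < a) :
    ∫⁻ x, g x ^ a ∂μ = ENNReal.ofReal a *
      ∫⁻ s in Set.Ioi (0 : ℝ), μ {x | ENNReal.ofReal s < g x} * ENNReal.ofReal (s ^ (a - 1)) := by
  rcases eq_or_ne (μ {x | g x = ∞}) 0 with htop | htop
  · have hfin : ∀ᵐ x ∂μ, ENNReal.ofReal (g x).toReal = g x := by
      filter_upwards [measure_eq_zero_iff_ae_notMem.mp htop] with x hx using ofReal_toReal hx
    have hmeas (s : ℝ) : μ {x | ENNReal.ofReal s < g x} =
        μ {x | ENNReal.ofReal s < ENNReal.ofReal (g x).toReal} :=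
      measure_congr (by
        filter_upwards [hfin] with x hx
        exact congrArg (ENNReal.ofReal s < ·) hx.symm)
    calc ∫⁻ x, g x ^ a ∂μ = ∫⁻ x, ENNReal.ofReal ((g x).toReal ^ a) ∂μ := by
          refine lintegral_congr_ae ?_
          filter_upwards [hfin] with x hx
          rw [← ENNReal.ofReal_rpow_of_nonneg toReal_nonneg ha.le, hx]
      _ = _ := by
          rw [lintegral_rpow_eq_lintegral_meas_lt_mul μ (.of_forall fun x => toReal_nonneg)
            (by fun_prop) ha]
          congr 1
          refine setLIntegral_congr_fun measurableSet_Ioi fun s hs => ?_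
          simp only [hmeas, ENNReal.ofReal_lt_ofReal_iff_of_nonneg (le_of_lt hs)]
  · have hle (s : ℝ) : μ {x | g x = ∞} ≤ μ {x | ENNReal.ofReal s < g x} :=
      measure_mono fun x hx => by simp_all
    have hright : ∫⁻ s in Set.Ioi (0 : ℝ),
        μ {x | ENNReal.ofReal s < g x} * ENNReal.ofReal (s ^ (a - 1)) = ∞ := by
      refine top_le_iff.mp ?_
      calc ∞ = μ {x | g x = ∞} * ∫⁻ s in Set.Ioi (0 : ℝ), ENNReal.ofReal (s ^ (a - 1)) := by
            rw [setLIntegral_Ioi_rpow_eq_top, mul_top htop]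
        _ ≤ ∫⁻ s in Set.Ioi (0 : ℝ), μ {x | g x = ∞} * ENNReal.ofReal (s ^ (a - 1)) :=
            lintegral_const_mul_le _ _
        _ ≤ _ := lintegral_mono fun s => mul_le_mul_left (hle s) _
    rw [hright, mul_top (by simpa using ha)]
    refine lintegral_eq_top_of_measure_eq_top_ne_zero (by fun_prop) fun h => htop ?_
    simpa [ENNReal.rpow_eq_top_iff, ha, ha.le, not_lt.mpr ha.le] using h

lemma lintegral_rpow_le_of_forall_mul_meas_lt_le {g w : Ω → ℝ≥0∞} (hg : Measurable g)
    (hw : Measurable w) {A B : ℝ≥0∞} (hA : A ≠ ∞) {t : ℝ} (ht : 1 < t)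
    (h : ∀ s : ℝ, 0 < s → ENNReal.ofReal s * μ {x | ENNReal.ofReal s < g x} ≤
      A * ∫⁻ x in {x | ENNReal.ofReal s < B * w x}, w x ∂μ) :
    ∫⁻ x, g x ^ t ∂μ ≤
      ENNReal.ofReal (t / (t - 1)) * A * B ^ (t - 1) * ∫⁻ x, w x ^ t ∂μ := by
  have ht1 : 0 < t - 1 := sub_pos.mpr ht
  calc ∫⁻ x, g x ^ t ∂μ
      = ENNReal.ofReal t * ∫⁻ s in Set.Ioi (0 : ℝ),
          μ {x | ENNReal.ofReal s < g x} * ENNReal.ofReal (s ^ (t - 1)) :=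
        lintegral_rpow_eq_lintegral_meas_ofReal_lt_mul hg (by linarith)
    _ ≤ ENNReal.ofReal t * ∫⁻ s in Set.Ioi (0 : ℝ), A *
          (μ.withDensity w {x | ENNReal.ofReal s < B * w x} *
            ENNReal.ofReal (s ^ (t - 1 - 1))) := by
        gcongr ENNReal.ofReal t * ?_
        refine setLIntegral_mono' measurableSet_Ioi fun s (hs : 0 < s) => ?_
        rw [withDensity_apply _ (measurableSet_lt measurable_const (by fun_prop)), ← mul_assoc,
          show s ^ (t - 1) = s * s ^ (t - 1 - 1) by
            rw [Real.rpow_sub_one hs.ne' (t - 1), mul_div_cancel₀ _ hs.ne'],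
          ENNReal.ofReal_mul hs.le, ← mul_assoc, mul_comm (μ _)]
        exact mul_le_mul_left (h s hs) _
    _ = ENNReal.ofReal (t / (t - 1)) * A * (ENNReal.ofReal (t - 1) * ∫⁻ s in Set.Ioi (0 : ℝ),
          μ.withDensity w {x | ENNReal.ofReal s < B * w x} *
            ENNReal.ofReal (s ^ (t - 1 - 1))) := by
        rw [lintegral_const_mul' _ _ hA, mul_mul_mul_comm, ← ENNReal.ofReal_mul (by positivity),
          div_mul_cancel₀ _ ht1.ne']
    _ = ENNReal.ofReal (t / (t - 1)) * A * ∫⁻ x, w x * (B * w x) ^ (t - 1) ∂μ := by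
        rw [← lintegral_rpow_eq_lintegral_meas_ofReal_lt_mul (by fun_prop) ht1,
          lintegral_withDensity_eq_lintegral_mul _ hw (by fun_prop)]
        rfl
    _ = _ := by
        rw [mul_assoc _ (B ^ _), ← lintegral_const_mul _ (hw.pow_const t)]
        refine congrArg _ (lintegral_congr fun x => ?_)
        rw [ENNReal.mul_rpow_of_nonneg _ _ ht1.le, mul_left_comm]
        nth_rw 1 [← rpow_one (w x)]
        rw [← ENNReal.rpow_add_of_nonneg _ _ zero_le_one ht1.le, add_sub_cancel]

end LayerCake

section MaximalFunction

/-- The centred Hardy–Littlewood maximal function on the line. Only the radii `2 ^ n`, `n : ℤ`,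
are used, so that it is a countable supremum. -/
def maximalFun (w : ℝ → ℝ≥0∞) (x : ℝ) : ℝ≥0∞ :=
  ⨆ n : ℤ, ⨍⁻ y in Metric.closedBall x ((2 : ℝ) ^ n), w y ∂volume

variable {w : ℝ → ℝ≥0∞}

lemma measurable_maximalFun (hw : Measurable w) : Measurable (maximalFun w) := by
  refine Measurable.iSup fun n => ?_
  have hball (x : ℝ) : ∫⁻ y in Metric.closedBall x ((2 : ℝ) ^ n), w y =
      ∫⁻ y, {z : ℝ × ℝ | dist z.2 z.1 ≤ (2 : ℝ) ^ n}.indicator (fun z => w z.2) (x, y) := by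
    rw [← lintegral_indicator Metric.isClosed_closedBall.measurableSet]
    rfl
  simp_rw [setLAverage_eq, Real.volume_closedBall, hball]
  refine (Measurable.lintegral_prod_right' ?_).div_const _
  exact (hw.comp measurable_snd).indicator
    (measurableSet_le (measurable_snd.dist measurable_fst) measurable_const)

lemma maximalFun_one (x : ℝ) : maximalFun (fun _ => 1) x = 1 := by
  have hone (n : ℤ) : ⨍⁻ _ in Metric.closedBall x ((2 : ℝ) ^ n), (1 : ℝ≥0∞) ∂volume = 1 :=
    setLAverage_one (Metric.measure_closedBall_pos volume x (by positivity)).ne'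
      measure_closedBall_lt_top.ne
  simp only [maximalFun, hone, ciSup_const]

lemma exists_mul_volume_closedBall_le_of_lt_maximalFun {s : ℝ≥0∞} {x : ℝ}
    (hx : s < maximalFun w x) : ∃ n : ℤ, s * volume (Metric.closedBall x ((2 : ℝ) ^ n)) ≤
      ∫⁻ y in Metric.closedBall x ((2 : ℝ) ^ n), w y := by
  obtain ⟨n, hn⟩ := lt_iSup_iff.mp hx
  rw [setLAverage_eq] at hn
  exact ⟨n, mul_le_of_le_div hn.le⟩

lemma mul_volume_lt_maximalFun_le (w : ℝ → ℝ≥0∞) {s : ℝ≥0∞} (hs : s ≠ ∞) :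
    s * volume {x | s < maximalFun w x} ≤ 5 * ∫⁻ y, w y := by
  rcases eq_or_ne s 0 with rfl | hs0
  · simp
  rcases eq_or_ne (∫⁻ y, w y) ∞ with hI | hI
  · simp [hI]
  choose! n hle using fun x (hx : x ∈ {x | s < maximalFun w x}) =>
    exists_mul_volume_closedBall_le_of_lt_maximalFun hx
  simp only [Real.volume_closedBall] at hle
  have hradius (x) (hx : x ∈ {x | s < maximalFun w x}) : 2 ^ n x ≤ ((∫⁻ y, w y) / s).toReal := by
    rw [← ENNReal.ofReal_le_iff_le_toReal (div_lt_top hI hs0).ne,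
      ENNReal.le_div_iff_mul_le (.inl hs0) (.inl hs), mul_comm]
    calc s * ENNReal.ofReal (2 ^ n x) ≤ s * ENNReal.ofReal (2 * 2 ^ n x) := by
          gcongr
          linarith [zpow_pos (zero_lt_two' ℝ) (n x)]
      _ ≤ ∫⁻ y, w y := (hle x hx).trans (setLIntegral_le_lintegral _ _)
  obtain ⟨u, hu, hdisj, hcover⟩ :=
    Vitali.exists_disjoint_subfamily_covering_enlargement_closedBall {x | s < maximalFun w x}
      (fun x => x) (fun x => (2 : ℝ) ^ n x) _ hradius 5 (by norm_num)
  have hcount : u.Countable := hdisj.countable_of_nonempty_interior fun x _ => by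
    rw [interior_closedBall _ (by positivity)]
    exact Metric.nonempty_ball.mpr (by positivity)
  have hsub : {x | s < maximalFun w x} ⊆ ⋃ b ∈ u, Metric.closedBall b (5 * (2 : ℝ) ^ n b) := by
    intro x hx
    obtain ⟨b, hb, h⟩ := hcover x hx
    exact Set.mem_biUnion hb (h (Metric.mem_closedBall_self (by positivity)))
  calc s * volume {x | s < maximalFun w x}
      ≤ s * ∑' b : u, volume (Metric.closedBall (b : ℝ) (5 * (2 : ℝ) ^ n b)) := by
        gcongr
        exact (measure_mono hsub).trans (measure_biUnion_le _ hcount _)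
    _ = 5 * ∑' b : u, s * ENNReal.ofReal (2 * 2 ^ n (b : ℝ)) := by
        simp_rw [← ENNReal.tsum_mul_left, Real.volume_closedBall, mul_left_comm (2 : ℝ) 5,
          ENNReal.ofReal_mul (show (0 : ℝ) ≤ 5 by norm_num), ENNReal.ofReal_ofNat,
          mul_left_comm s 5]
    _ ≤ 5 * ∑' b : u, ∫⁻ y in Metric.closedBall (b : ℝ) ((2 : ℝ) ^ n b), w y := by
        gcongr with b
        exact hle b (hu b.2)
    _ = 5 * ∫⁻ y in ⋃ b ∈ u, Metric.closedBall b ((2 : ℝ) ^ n b), w y := by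
        rw [lintegral_biUnion hcount (fun b _ => Metric.isClosed_closedBall.measurableSet) hdisj]
    _ ≤ 5 * ∫⁻ y, w y := mul_le_mul_right (setLIntegral_le_lintegral _ _) _

lemma maximalFun_le_maximalFun_indicator_add (w : ℝ → ℝ≥0∞) (a : ℝ≥0∞) (x : ℝ) :
    maximalFun w x ≤ maximalFun ({y | a < w y}.indicator w) x + a := by
  refine iSup_le fun n => le_trans ?_ (add_le_add_left (le_iSup _ n) _)
  calc ⨍⁻ y in Metric.closedBall x ((2 : ℝ) ^ n), w y ∂volume
      ≤ ⨍⁻ y in Metric.closedBall x ((2 : ℝ) ^ n), ({y | a < w y}.indicator w y + a) ∂volume := by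
        refine laverage_mono_ae (.of_forall fun y => ?_)
        by_cases h : a < w y
        · simp [h]
        · simpa [Set.indicator_of_notMem (s := {y | a < w y}) h] using h
    _ = _ := by
        rw [laverage_eq, lintegral_add_right _ measurable_const, ENNReal.add_div, ← laverage_eq,
          ← laverage_eq, setLAverage_const
            (Metric.measure_closedBall_pos volume x (by positivity)).ne'
            measure_closedBall_lt_top.ne]

theorem lintegral_maximalFun_rpow_le (hw : Measurable w) {t : ℝ} (ht : 1 < t) :
    ∫⁻ x, maximalFun w x ^ t ≤
      ENNReal.ofReal (t / (t - 1)) * 10 * 2 ^ (t - 1) * ∫⁻ x, w x ^ t := by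
  refine lintegral_rpow_le_of_forall_mul_meas_lt_le (measurable_maximalFun hw) hw (by simp) ht
    fun s _ => ?_
  set a := ENNReal.ofReal (s / 2)
  have hsa : ENNReal.ofReal s = 2 * a := by
    rw [← ENNReal.ofReal_ofNat, ← ENNReal.ofReal_mul zero_le_two]
    congr 1
    ring
  have hsub : {x | ENNReal.ofReal s < maximalFun w x} ⊆
      {x | a < maximalFun ({y | a < w y}.indicator w) x} := fun x hx => by
    have := (show ENNReal.ofReal s < maximalFun w x from hx).trans_le
      (maximalFun_le_maximalFun_indicator_add w a x)
    rw [hsa, two_mul] at this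
    exact (ENNReal.add_lt_add_iff_right ofReal_ne_top).mp this
  calc ENNReal.ofReal s * volume {x | ENNReal.ofReal s < maximalFun w x}
      ≤ 2 * (a * volume {x | a < maximalFun ({y | a < w y}.indicator w) x}) := by
        rw [hsa, mul_assoc, ← hsa]
        gcongr
    _ ≤ 2 * (5 * ∫⁻ y, {y | a < w y}.indicator w y) :=
        mul_le_mul_right (mul_volume_lt_maximalFun_le _ ofReal_ne_top) _
    _ = 10 * ∫⁻ y in {y | ENNReal.ofReal s < 2 * w y}, w y := by
        rw [← mul_assoc, lintegral_indicator (measurableSet_lt measurable_const hw), hsa]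
        simp_rw [ENNReal.mul_lt_mul_iff_right two_ne_zero ofNat_ne_top]
        norm_num

end MaximalFunction

section Stein

variable {X κ : Type*} [MeasurableSpace X] {μ : Measure X}

/-- The positive operator with integral kernel `k`. -/
def kernelOp (μ : Measure X) (k : X → X → ℝ≥0∞) (h : X → ℝ≥0∞) (x : X) : ℝ≥0∞ :=
  ∫⁻ y, k x y * h y ∂μ

/-- A countable family of symmetric kernels whose operators are bounded on constants, and whose
maximal operator is bounded on every `L^t`, `t > 1`. These are the families to which Stein's
vector-valued inequality applies. -/
structure IsMaximalKernelFamily (μ : Measure X) (K : κ → X → X → ℝ≥0∞) (A : ℝ≥0) : Prop where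
  measurable (i : κ) : Measurable fun z : X × X => K i z.1 z.2
  symm (i : κ) (x y : X) : K i x y = K i y x
  kernelOp_one_le (i : κ) (x : X) : kernelOp μ (K i) (fun _ => 1) x ≤ A
  exists_maximal_le (t : ℝ) (ht : 1 < t) : ∃ C : ℝ≥0, ∀ w : X → ℝ≥0∞, Measurable w →
    ∫⁻ x, (⨆ i, kernelOp μ (K i) w x) ^ t ∂μ ≤ C * ∫⁻ x, w x ^ t ∂μ

lemma kernelOp_const_mul {c : ℝ≥0∞} (hc : c ≠ ∞) (k : X → X → ℝ≥0∞) (h : X → ℝ≥0∞) (x : X) :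
    kernelOp μ k (fun y => c * h y) x = c * kernelOp μ k h x := by
  simp only [kernelOp, mul_left_comm _ c, lintegral_const_mul' _ _ hc]

lemma rpow_sum_le_card_rpow_mul_sum_rpow {ι : Type*} (F : Finset ι) (a : ι → ℝ≥0∞) {t : ℝ}
    (ht : 0 < t) : (∑ i ∈ F, a i) ^ t ≤ F.card ^ t * ∑ i ∈ F, a i ^ t := by
  rcases F.eq_empty_or_nonempty with rfl | hF
  · simp [ht]
  obtain ⟨j, hj, hmax⟩ := F.exists_max_image a hF
  calc (∑ i ∈ F, a i) ^ t ≤ (F.card * a j) ^ t := by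
        gcongr
        simpa using Finset.sum_le_card_nsmul F a (a j) hmax
    _ = F.card ^ t * a j ^ t := ENNReal.mul_rpow_of_nonneg _ _ ht.le
    _ ≤ _ := by
        gcongr
        exact Finset.single_le_sum (f := fun i => a i ^ t) (fun _ _ => zero_le) hj

lemma sum_mul_rpow_dual {ι : Type*} {F : Finset ι} {a : ι → ℝ≥0∞} {s t : ℝ} (hs : 1 < s)
    (ht : 0 < t) (hfin : ∑ i ∈ F, a i ^ s ≠ ∞) :
    (∑ i ∈ F, a i ^ s) ^ t ≤
      ∑ i ∈ F, a i * (a i ^ (s - 1) * (∑ j ∈ F, a j ^ s) ^ (t - 1)) := by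
  set H := ∑ i ∈ F, a i ^ s with hH
  rcases eq_or_ne H 0 with h0 | h0
  · simp [h0, ht]
  refine le_of_eq ?_
  calc H ^ t = H * H ^ (t - 1) := by
        nth_rw 2 [← rpow_one H]
        rw [← ENNReal.rpow_add _ _ h0 hfin, add_sub_cancel]
    _ = _ := by
        conv_lhs => rw [hH, Finset.sum_mul]
        refine Finset.sum_congr rfl fun i _ => ?_
        rw [← mul_assoc]
        nth_rw 2 [← rpow_one (a i)]
        rw [← ENNReal.rpow_add_of_nonneg _ _ zero_le_one (by linarith), add_sub_cancel]

lemma sum_rpow_dual_le {ι : Type*} {F : Finset ι} {a : ι → ℝ≥0∞} {s q : ℝ} (hs : 1 < s)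
    (hq : 1 < q) (hfin : ∑ i ∈ F, a i ^ s ≠ ∞) :
    (∑ i ∈ F, (a i ^ (s - 1) * (∑ j ∈ F, a j ^ s) ^ (q / s - 1)) ^ (s / (s - 1))) ^
        (q / (q - 1) / (s / (s - 1))) ≤ (∑ i ∈ F, a i ^ s) ^ (q / s) := by
  have hs1 : 0 < s - 1 := sub_pos.mpr hs
  have hq1 : 0 < q - 1 := sub_pos.mpr hq
  set H := ∑ i ∈ F, a i ^ s with hH
  have hterm (i : ι) : (a i ^ (s - 1) * H ^ (q / s - 1)) ^ (s / (s - 1)) =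
      a i ^ s * H ^ ((q / s - 1) * (s / (s - 1))) := by
    rw [ENNReal.mul_rpow_of_nonneg _ _ (by positivity), ← ENNReal.rpow_mul, ← ENNReal.rpow_mul,
      mul_div_cancel₀ _ hs1.ne']
  simp_rw [hterm, ← Finset.sum_mul, ← hH]
  rcases eq_or_ne H 0 with h0 | h0
  · simp [h0, show 0 < q / (q - 1) / (s / (s - 1)) by positivity]
  nth_rw 1 [← rpow_one H]
  rw [← ENNReal.rpow_add _ _ h0 hfin, ← ENNReal.rpow_mul]
  refine le_of_eq (congrArg _ ?_)
  field_simp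
  ring

namespace IsMaximalKernelFamily

variable {K : κ → X → X → ℝ≥0∞} {A : ℝ≥0} {ι : Type*} {h g : X → ℝ≥0∞} {s q t : ℝ}

lemma measurable_right (hK : IsMaximalKernelFamily μ K A) (i : κ) (x : X) :
    Measurable (K i x) :=
  (hK.measurable i).comp measurable_prodMk_left

lemma measurable_kernelOp [SFinite μ] (hK : IsMaximalKernelFamily μ K A) (i : κ)
    (hh : Measurable h) : Measurable (kernelOp μ (K i) h) :=
  ((hK.measurable i).mul (hh.comp measurable_snd)).lintegral_prod_right'

lemma lintegral_kernelOp_mul [SFinite μ] (hK : IsMaximalKernelFamily μ K A) (i : κ)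
    (hh : Measurable h) (hg : Measurable g) :
    ∫⁻ x, kernelOp μ (K i) h x * g x ∂μ = ∫⁻ x, h x * kernelOp μ (K i) g x ∂μ := by
  have hmeas (x : X) : Measurable (K i x) := hK.measurable_right i x
  calc ∫⁻ x, kernelOp μ (K i) h x * g x ∂μ
      = ∫⁻ x, ∫⁻ y, K i x y * h y * g x ∂μ ∂μ :=
        lintegral_congr fun x => (lintegral_mul_const _ ((hmeas x).mul hh)).symm
    _ = ∫⁻ y, ∫⁻ x, K i x y * h y * g x ∂μ ∂μ :=
        lintegral_lintegral_swap (((hK.measurable i).mul (hh.comp measurable_snd)).mul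
          (hg.comp measurable_fst)).aemeasurable
    _ = ∫⁻ y, h y * kernelOp μ (K i) g y ∂μ := by
        refine lintegral_congr fun y => ?_
        rw [kernelOp, ← lintegral_const_mul (h y) (by fun_prop)]
        refine lintegral_congr fun x => ?_
        rw [hK.symm i x y, mul_comm (K i y x), mul_assoc]

lemma kernelOp_rpow_le (hK : IsMaximalKernelFamily μ K A) (i : κ) (hh : Measurable h)
    (hs : 1 ≤ s) (x : X) :
    kernelOp μ (K i) h x ^ s ≤ A ^ (s - 1) * kernelOp μ (K i) (fun y => h y ^ s) x := by
  have hs0 : 0 < s := by linarith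
  have hs1 : 0 ≤ 1 - 1 / s := by simpa using inv_le_one_of_one_le₀ hs
  have hmeas : Measurable (K i x) := hK.measurable_right i x
  have hholder : kernelOp μ (K i) h x ≤
      kernelOp μ (K i) (fun y => h y ^ s) x ^ (1 / s) * (A : ℝ≥0∞) ^ (1 - 1 / s) :=
    calc kernelOp μ (K i) h x
        = ∫⁻ y, (K i x y * h y ^ s) ^ (1 / s) * (K i x y * 1) ^ (1 - 1 / s) ∂μ := by
          refine lintegral_congr fun y => ?_
          rw [mul_one, ENNReal.mul_rpow_of_nonneg _ _ (by positivity), mul_right_comm,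
            ← ENNReal.rpow_add_of_nonneg _ _ (by positivity) hs1, ← ENNReal.rpow_mul,
            mul_one_div_cancel hs0.ne', add_sub_cancel, rpow_one, rpow_one]
      _ ≤ kernelOp μ (K i) (fun y => h y ^ s) x ^ (1 / s) *
            kernelOp μ (K i) (fun _ => 1) x ^ (1 - 1 / s) :=
          ENNReal.lintegral_mul_norm_pow_le (by fun_prop) (by fun_prop) (by positivity) hs1
            (by ring)
      _ ≤ _ := by
          gcongr
          exact hK.kernelOp_one_le i x
  calc kernelOp μ (K i) h x ^ s
      ≤ (kernelOp μ (K i) (fun y => h y ^ s) x ^ (1 / s) * (A : ℝ≥0∞) ^ (1 - 1 / s)) ^ s :=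
        ENNReal.rpow_le_rpow hholder hs0.le
    _ = _ := by
        rw [ENNReal.mul_rpow_of_nonneg _ _ hs0.le, ← ENNReal.rpow_mul, ← ENNReal.rpow_mul, mul_comm,
          one_div_mul_cancel hs0.ne', sub_mul, one_div_mul_cancel hs0.ne', one_mul, rpow_one]

lemma lintegral_kernelOp_rpow_le [SFinite μ] (hK : IsMaximalKernelFamily μ K A) (i : κ)
    (hh : Measurable h) (hq : 1 ≤ q) :
    ∫⁻ x, kernelOp μ (K i) h x ^ q ∂μ ≤ A ^ (q - 1) * A * ∫⁻ x, h x ^ q ∂μ := by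
  have hA : (A : ℝ≥0∞) ^ (q - 1) ≠ ∞ := rpow_ne_top_of_nonneg (by linarith) coe_ne_top
  calc ∫⁻ x, kernelOp μ (K i) h x ^ q ∂μ
      ≤ ∫⁻ x, A ^ (q - 1) * (kernelOp μ (K i) (fun y => h y ^ q) x * 1) ∂μ := by
        simpa only [mul_one] using lintegral_mono fun x => hK.kernelOp_rpow_le i hh hq x
    _ = A ^ (q - 1) * ∫⁻ x, h x ^ q * kernelOp μ (K i) (fun _ => 1) x ∂μ := by
        rw [lintegral_const_mul' _ _ hA,
          hK.lintegral_kernelOp_mul i (hh.pow_const q) measurable_const]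
    _ ≤ A ^ (q - 1) * ∫⁻ x, h x ^ q * A ∂μ := by
        gcongr with x
        exact hK.kernelOp_one_le i x
    _ = _ := by
        rw [lintegral_mul_const' _ _ coe_ne_top]
        ring

lemma lintegral_rpow_sum_kernelOp_ne_top [SFinite μ] (hK : IsMaximalKernelFamily μ K A)
    (hs : 0 < s) (hq : 1 ≤ q) (F : Finset ι) (m : ι → κ) {h : ι → X → ℝ≥0∞}
    (hh : ∀ i, Measurable (h i)) (hfin : ∫⁻ x, (∑ i ∈ F, h i x ^ s) ^ (q / s) ∂μ ≠ ∞) :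
    ∫⁻ x, (∑ i ∈ F, kernelOp μ (K (m i)) (h i) x ^ s) ^ (q / s) ∂μ ≠ ∞ := by
  have hqs : 0 < q / s := by positivity
  have hpow (a : ℝ≥0∞) : (a ^ s) ^ (q / s) = a ^ q := by
    rw [← ENNReal.rpow_mul, mul_div_cancel₀ _ hs.ne']
  have hcard : (F.card : ℝ≥0∞) ^ (q / s) ≠ ∞ := by simp [hqs.le]
  have hA : (A : ℝ≥0∞) ^ (q - 1) * A ≠ ∞ :=
    ENNReal.mul_ne_top (rpow_ne_top_of_nonneg (by linarith) coe_ne_top) coe_ne_top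
  have hterm (i) (hi : i ∈ F) : ∫⁻ x, kernelOp μ (K (m i)) (h i) x ^ q ∂μ ≠ ∞ := by
    refine ne_top_of_le_ne_top (ENNReal.mul_ne_top hA hfin)
      ((hK.lintegral_kernelOp_rpow_le (m i) (hh i) hq).trans ?_)
    refine mul_le_mul_right (lintegral_mono fun x => ?_) _
    rw [← hpow (h i x)]
    gcongr
    exact Finset.single_le_sum (f := fun i => h i x ^ s) (fun _ _ => zero_le) hi
  refine ne_top_of_le_ne_top
    (ENNReal.mul_ne_top hcard (ENNReal.sum_ne_top.mpr hterm)) ?_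
  rw [← lintegral_finsetSum _ fun i _ => (hK.measurable_kernelOp (m i) (hh i)).pow_const q,
    ← lintegral_const_mul' _ _ hcard]
  gcongr with x
  simpa only [hpow] using
    rpow_sum_le_card_rpow_mul_sum_rpow F (fun i => kernelOp μ (K (m i)) (h i) x ^ s) hqs

lemma exists_lintegral_mul_iSup_kernelOp_rpow_le [Countable κ] [SFinite μ]
    (hK : IsMaximalKernelFamily μ K A) (ht : 1 ≤ t) :
    ∃ C : ℝ≥0, ∀ H h : X → ℝ≥0∞, Measurable H → Measurable h →
      ∫⁻ x, h x * ⨆ i, kernelOp μ (K i) (fun y => H y ^ (t - 1)) x ∂μ ≤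
        C * ((∫⁻ x, h x ^ t ∂μ) ^ (1 / t) * (∫⁻ x, H x ^ t ∂μ) ^ (1 - 1 / t)) := by
  rcases ht.eq_or_lt with rfl | ht1
  · refine ⟨A, fun H h _ hh => ?_⟩
    calc ∫⁻ x, h x * ⨆ i, kernelOp μ (K i) (fun y => H y ^ ((1 : ℝ) - 1)) x ∂μ
        ≤ ∫⁻ x, A * h x ∂μ := by
          refine lintegral_mono fun x => ?_
          rw [mul_comm (A : ℝ≥0∞)]
          gcongr
          simpa using fun i => hK.kernelOp_one_le i x
      _ = _ := by simp [lintegral_const_mul _ hh]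
  · have ht0 : 0 < t := by linarith
    have htsub : t - 1 ≠ 0 := by linarith
    have hθ : 0 ≤ 1 - 1 / t := by simpa using inv_le_one_of_one_le₀ ht
    have hconj : t / (t - 1) * (1 - 1 / t) = 1 := by field_simp
    obtain ⟨C, hC⟩ := hK.exists_maximal_le (t / (t - 1))
      ((one_lt_div (by linarith)).mpr (by linarith))
    refine ⟨C ^ (1 - 1 / t), fun H h hH hh => ?_⟩
    set M : X → ℝ≥0∞ := fun x => ⨆ i, kernelOp μ (K i) (fun y => H y ^ (t - 1)) x
    have hM : Measurable M :=
      Measurable.iSup fun i => hK.measurable_kernelOp i (hH.pow_const (t - 1))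
    calc ∫⁻ x, h x * M x ∂μ
        = ∫⁻ x, (h x ^ t) ^ (1 / t) * (M x ^ (t / (t - 1))) ^ (1 - 1 / t) ∂μ := by
          simp only [← ENNReal.rpow_mul, mul_one_div_cancel ht0.ne', hconj, rpow_one]
      _ ≤ (∫⁻ x, h x ^ t ∂μ) ^ (1 / t) * (∫⁻ x, M x ^ (t / (t - 1)) ∂μ) ^ (1 - 1 / t) :=
          ENNReal.lintegral_mul_norm_pow_le (by fun_prop) (by fun_prop) (by positivity) hθ
            (by ring)
      _ ≤ (∫⁻ x, h x ^ t ∂μ) ^ (1 / t) * (C * ∫⁻ x, H x ^ t ∂μ) ^ (1 - 1 / t) := by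
          gcongr
          refine (hC _ (hH.pow_const (t - 1))).trans_eq ?_
          simp only [← ENNReal.rpow_mul, mul_div_cancel₀ _ htsub]
      _ = _ := by
          rw [ENNReal.mul_rpow_of_nonneg _ _ hθ, ENNReal.coe_rpow_of_nonneg _ hθ]
          ring

lemma sum_lintegral_kernelOp_rpow_mul_le [SFinite μ] [Countable κ]
    (hK : IsMaximalKernelFamily μ K A)
    (hs : 1 ≤ s) (F : Finset ι) (m : ι → κ) {h : ι → X → ℝ≥0∞} (hh : ∀ i, Measurable (h i))
    {w : X → ℝ≥0∞} (hw : Measurable w) :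
    ∫⁻ x, (∑ i ∈ F, kernelOp μ (K (m i)) (h i) x ^ s) * w x ∂μ ≤
      A ^ (s - 1) * ∫⁻ x, (∑ i ∈ F, h i x ^ s) * ⨆ j, kernelOp μ (K j) w x ∂μ := by
  have hA : (A : ℝ≥0∞) ^ (s - 1) ≠ ∞ := rpow_ne_top_of_nonneg (by linarith) coe_ne_top
  have hM : Measurable fun x => ⨆ j, kernelOp μ (K j) w x :=
    Measurable.iSup fun j => hK.measurable_kernelOp j hw
  have hT (i) : Measurable (kernelOp μ (K (m i)) (h i)) := hK.measurable_kernelOp (m i) (hh i)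
  simp_rw [Finset.sum_mul]
  rw [lintegral_finsetSum _ fun i _ => by fun_prop, lintegral_finsetSum _ fun i _ => by fun_prop,
    Finset.mul_sum]
  refine Finset.sum_le_sum fun i _ => ?_
  calc ∫⁻ x, kernelOp μ (K (m i)) (h i) x ^ s * w x ∂μ
      ≤ ∫⁻ x, A ^ (s - 1) * (kernelOp μ (K (m i)) (fun y => h i y ^ s) x * w x) ∂μ := by
        refine lintegral_mono fun x => ?_
        rw [← mul_assoc]
        gcongr
        exact hK.kernelOp_rpow_le (m i) (hh i) hs x
    _ = A ^ (s - 1) * ∫⁻ x, h i x ^ s * kernelOp μ (K (m i)) w x ∂μ := by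
        rw [lintegral_const_mul' _ _ hA, hK.lintegral_kernelOp_mul _ ((hh i).pow_const s) hw]
    _ ≤ _ := by
        gcongr with x
        exact le_iSup (fun j => kernelOp μ (K j) w x) (m i)

theorem exists_lintegral_rpow_sum_kernelOp_le_of_le [SFinite μ] [Countable κ]
    (hK : IsMaximalKernelFamily μ K A) (hs : 1 ≤ s) (hsq : s ≤ q) :
    ∃ C : ℝ≥0, ∀ (F : Finset ι) (m : ι → κ) (h : ι → X → ℝ≥0∞), (∀ i, Measurable (h i)) →
      ∫⁻ x, (∑ i ∈ F, kernelOp μ (K (m i)) (h i) x ^ s) ^ (q / s) ∂μ ≤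
        C * ∫⁻ x, (∑ i ∈ F, h i x ^ s) ^ (q / s) ∂μ := by
  have hs0 : 0 < s := by linarith
  have hqs : 1 ≤ q / s := (one_le_div hs0).mpr hsq
  obtain ⟨C, hC⟩ := hK.exists_lintegral_mul_iSup_kernelOp_rpow_le hqs
  refine ⟨(A ^ (s - 1) * C) ^ (1 / (1 / (q / s))) + 1, fun F m h hh => ?_⟩
  set t := q / s
  set R := ∫⁻ x, (∑ i ∈ F, h i x ^ s) ^ t ∂μ
  rcases eq_or_ne R ∞ with hRtop | hRtop
  · simp [hRtop]
  set H : X → ℝ≥0∞ := fun x => ∑ i ∈ F, kernelOp μ (K (m i)) (h i) x ^ s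
  have hH : Measurable H :=
    Finset.measurable_sum _ fun i _ => (hK.measurable_kernelOp (m i) (hh i)).pow_const s
  have hle : ∫⁻ x, H x ^ t ∂μ ≤
      A ^ (s - 1) * C * (R ^ (1 / t) * (∫⁻ x, H x ^ t ∂μ) ^ (1 - 1 / t)) :=
    calc ∫⁻ x, H x ^ t ∂μ = ∫⁻ x, H x * H x ^ (t - 1) ∂μ := by
          refine lintegral_congr fun x => ?_
          nth_rw 2 [← rpow_one (H x)]
          rw [← ENNReal.rpow_add_of_nonneg _ _ zero_le_one (by linarith), add_sub_cancel]
      _ ≤ A ^ (s - 1) * ∫⁻ x, (∑ i ∈ F, h i x ^ s) *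
            ⨆ j, kernelOp μ (K j) (fun y => H y ^ (t - 1)) x ∂μ :=
          hK.sum_lintegral_kernelOp_rpow_mul_le hs F m hh (hH.pow_const _)
      _ ≤ A ^ (s - 1) * (C * (R ^ (1 / t) * (∫⁻ x, H x ^ t ∂μ) ^ (1 - 1 / t))) :=
          mul_le_mul_right
            (hC H _ hH (Finset.measurable_sum _ fun i _ => (hh i).pow_const s)) _
      _ = _ := by ring
  refine (le_rpow_mul_of_le_mul_rpow_mul_rpow (by positivity)
    (by simpa using inv_le_one_of_one_le₀ hqs)
    (hK.lintegral_rpow_sum_kernelOp_ne_top hs0 (hs.trans hsq) F m hh hRtop) hle).trans ?_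
  gcongr
  rw [ENNReal.coe_add, ENNReal.coe_rpow_of_nonneg _ (by positivity), ENNReal.coe_mul,
    ENNReal.coe_rpow_of_nonneg _ (by linarith)]
  exact le_self_add

lemma lintegral_sum_mul_kernelOp_le [SFinite μ] (hK : IsMaximalKernelFamily μ K A)
    (hs : 1 < s) (hq : 1 < q) (F : Finset ι) (m : ι → κ) {h g : ι → X → ℝ≥0∞}
    (hh : ∀ i, Measurable (h i)) (hg : ∀ i, Measurable (g i)) :
    ∫⁻ x, ∑ i ∈ F, h i x * kernelOp μ (K (m i)) (g i) x ∂μ ≤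
      (∫⁻ x, (∑ i ∈ F, h i x ^ s) ^ (q / s) ∂μ) ^ (1 / q) *
      (∫⁻ x, (∑ i ∈ F, kernelOp μ (K (m i)) (g i) x ^ (s / (s - 1))) ^
        (q / (q - 1) / (s / (s - 1))) ∂μ) ^ (1 - 1 / q) := by
  have hs1 : s - 1 ≠ 0 := by linarith
  have hq1 : q - 1 ≠ 0 := by linarith
  have hT (i) : Measurable (kernelOp μ (K (m i)) (g i)) := hK.measurable_kernelOp (m i) (hg i)
  have hexp : q / s * (1 / q) = 1 / s := by field_simp
  have hexp' : q / (q - 1) / (s / (s - 1)) * (1 - 1 / q) = 1 / (s / (s - 1)) := by field_simp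
  calc ∫⁻ x, ∑ i ∈ F, h i x * kernelOp μ (K (m i)) (g i) x ∂μ
      ≤ ∫⁻ x, ((∑ i ∈ F, h i x ^ s) ^ (q / s)) ^ (1 / q) *
          ((∑ i ∈ F, kernelOp μ (K (m i)) (g i) x ^ (s / (s - 1))) ^
            (q / (q - 1) / (s / (s - 1)))) ^ (1 - 1 / q) ∂μ := by
        refine lintegral_mono fun x => ?_
        simp only [← ENNReal.rpow_mul, hexp, hexp']
        exact ENNReal.inner_le_Lp_mul_Lq F _ _ (Real.HolderConjugate.conjExponent hs)
    _ ≤ _ := ENNReal.lintegral_mul_norm_pow_le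
        ((Finset.measurable_sum _ fun i _ => (hh i).pow_const s).pow_const _).aemeasurable
        ((Finset.measurable_sum _ fun i _ => (hT i).pow_const _).pow_const _).aemeasurable
        (by positivity) (by simpa using inv_le_one_of_one_le₀ hq.le) (by ring)

lemma lintegral_rpow_sum_kernelOp_le_of_dual [SFinite μ] (hK : IsMaximalKernelFamily μ K A)
    (hs : 1 < s) (hq : 1 < q) {C : ℝ≥0} (F : Finset ι) (m : ι → κ)
    (hC : ∀ g : ι → X → ℝ≥0∞, (∀ i, Measurable (g i)) →
      ∫⁻ x, (∑ i ∈ F, kernelOp μ (K (m i)) (g i) x ^ (s / (s - 1))) ^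
          (q / (q - 1) / (s / (s - 1))) ∂μ ≤
        C * ∫⁻ x, (∑ i ∈ F, g i x ^ (s / (s - 1))) ^ (q / (q - 1) / (s / (s - 1))) ∂μ)
    {h : ι → X → ℝ≥0∞} (hh : ∀ i, Measurable (h i))
    (hfin : ∫⁻ x, (∑ i ∈ F, h i x ^ s) ^ (q / s) ∂μ ≠ ∞) :
    ∫⁻ x, (∑ i ∈ F, kernelOp μ (K (m i)) (h i) x ^ s) ^ (q / s) ∂μ ≤
      C ^ (1 - 1 / q) * ((∫⁻ x, (∑ i ∈ F, h i x ^ s) ^ (q / s) ∂μ) ^ (1 / q) *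
        (∫⁻ x, (∑ i ∈ F, kernelOp μ (K (m i)) (h i) x ^ s) ^ (q / s) ∂μ) ^ (1 - 1 / q)) := by
  have hqs : 0 < q / s := by positivity
  set T : ι → X → ℝ≥0∞ := fun i => kernelOp μ (K (m i)) (h i)
  have hT (i) : Measurable (T i) := hK.measurable_kernelOp (m i) (hh i)
  set g : ι → X → ℝ≥0∞ := fun i x => T i x ^ (s - 1) * (∑ j ∈ F, T j x ^ s) ^ (q / s - 1)
  have hg (i) : Measurable (g i) := by fun_prop
  have hTg (i) := hK.measurable_kernelOp (m i) (hg i)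
  have hae : ∀ᵐ x ∂μ, ∑ i ∈ F, T i x ^ s ≠ ∞ := by
    have hI : ∫⁻ x, (∑ i ∈ F, T i x ^ s) ^ (q / s) ∂μ ≠ ∞ :=
      hK.lintegral_rpow_sum_kernelOp_ne_top (by linarith) hq.le F m hh hfin
    filter_upwards [ae_lt_top (by fun_prop) hI] with x hx htop
    simp [htop, hqs] at hx
  calc ∫⁻ x, (∑ i ∈ F, T i x ^ s) ^ (q / s) ∂μ
      ≤ ∫⁻ x, ∑ i ∈ F, T i x * g i x ∂μ := by
        refine lintegral_mono_ae ?_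
        filter_upwards [hae] with x hx using sum_mul_rpow_dual hs hqs hx
    _ = ∑ i ∈ F, ∫⁻ x, h i x * kernelOp μ (K (m i)) (g i) x ∂μ := by
        rw [lintegral_finsetSum _ fun i _ => by fun_prop]
        exact Finset.sum_congr rfl fun i _ => hK.lintegral_kernelOp_mul (m i) (hh i) (hg i)
    _ = ∫⁻ x, ∑ i ∈ F, h i x * kernelOp μ (K (m i)) (g i) x ∂μ :=
        (lintegral_finsetSum _ fun i _ => (hh i).mul (hTg i)).symm
    _ ≤ (∫⁻ x, (∑ i ∈ F, h i x ^ s) ^ (q / s) ∂μ) ^ (1 / q) *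
          (C * ∫⁻ x, (∑ i ∈ F, T i x ^ s) ^ (q / s) ∂μ) ^ (1 - 1 / q) := by
        refine (hK.lintegral_sum_mul_kernelOp_le hs hq F m hh hg).trans ?_
        have hθ : 0 ≤ 1 - 1 / q := by simpa using inv_le_one_of_one_le₀ hq.le
        gcongr
        refine (hC g hg).trans (mul_le_mul_right (lintegral_mono_ae ?_) _)
        filter_upwards [hae] with x hx using sum_rpow_dual_le hs hq hx
    _ = _ := by
        rw [ENNReal.mul_rpow_of_nonneg _ _ (by simpa using inv_le_one_of_one_le₀ hq.le)]
        ring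

/-- The case `q < s` follows by duality from the conjugate exponents, tested against
`(T h_i) ^ (s - 1) * (∑ (T h_j) ^ s) ^ (q / s - 1)`. -/
theorem exists_lintegral_rpow_sum_kernelOp_le [SFinite μ] [Countable κ]
    (hK : IsMaximalKernelFamily μ K A) (hs : 1 < s) (hq : 1 < q) :
    ∃ C : ℝ≥0, ∀ (F : Finset ι) (m : ι → κ) (h : ι → X → ℝ≥0∞), (∀ i, Measurable (h i)) →
      ∫⁻ x, (∑ i ∈ F, kernelOp μ (K (m i)) (h i) x ^ s) ^ (q / s) ∂μ ≤
        C * ∫⁻ x, (∑ i ∈ F, h i x ^ s) ^ (q / s) ∂μ := by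
  rcases le_or_gt s q with hsq | hqs
  · exact hK.exists_lintegral_rpow_sum_kernelOp_le_of_le hs.le hsq
  have hs1 : 0 < s - 1 := sub_pos.mpr hs
  have hq1 : 0 < q - 1 := sub_pos.mpr hq
  have hθ : 0 ≤ 1 - 1 / q := by simpa using inv_le_one_of_one_le₀ hq.le
  have hconj : s / (s - 1) ≤ q / (q - 1) := by
    rw [div_le_div_iff₀ hs1 hq1]
    linarith
  obtain ⟨C, hC⟩ := hK.exists_lintegral_rpow_sum_kernelOp_le_of_le (ι := ι)
    ((one_le_div hs1).mpr (by linarith)) hconj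
  refine ⟨(C ^ (1 - 1 / q)) ^ (1 / (1 / q)) + 1, fun F m h hh => ?_⟩
  rcases eq_or_ne (∫⁻ x, (∑ i ∈ F, h i x ^ s) ^ (q / s) ∂μ) ∞ with hR | hR
  · simp [hR]
  refine (le_rpow_mul_of_le_mul_rpow_mul_rpow (by positivity)
    (by simpa using inv_le_one_of_one_le₀ hq.le)
    (hK.lintegral_rpow_sum_kernelOp_ne_top (by linarith) hq.le F m hh hR)
    (hK.lintegral_rpow_sum_kernelOp_le_of_dual hs hq F m (hC F m) hh hR)).trans ?_
  gcongr
  rw [ENNReal.coe_add, ENNReal.coe_rpow_of_nonneg _ (by positivity),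
    ENNReal.coe_rpow_of_nonneg _ hθ]
  exact le_self_add

end IsMaximalKernelFamily

end Stein

section DecayKernel

/-- The quadratically decaying kernel at scale `2 ^ (-m)`. -/
def decayKernel (m : ℤ) (x y : ℝ) : ℝ≥0∞ :=
  ENNReal.ofReal (2 ^ m / (1 + 2 ^ m * |x - y|) ^ 2)

lemma measurable_decayKernel (m : ℤ) : Measurable fun z : ℝ × ℝ => decayKernel m z.1 z.2 := by
  unfold decayKernel
  fun_prop

lemma exists_le_two_pow_and_inv_sq_le {u : ℝ} (hu : 0 ≤ u) :
    ∃ k : ℕ, u ≤ 2 ^ k ∧ 1 / (1 + u) ^ 2 ≤ 4 * (2 ^ k)⁻¹ ^ 2 := by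
  rcases le_or_gt u 1 with h | h
  · refine ⟨0, by simpa using h, ?_⟩
    rw [div_le_iff₀ (by positivity)]
    norm_num
    nlinarith
  · obtain ⟨k, h1, h2⟩ := exists_nat_pow_near h.le (one_lt_two (α := ℝ))
    refine ⟨k + 1, h2.le, ?_⟩
    calc 1 / (1 + u) ^ 2 ≤ 1 / (2 ^ k) ^ 2 := by gcongr; linarith
      _ = _ := by
        rw [pow_succ]
        field_simp
        ring

/-- Quadratic decay leaves a factor `2⁻¹ ^ k` on the ball of radius `2 ^ (k - m)`. -/
lemma decayKernel_le_tsum (m : ℤ) (x y : ℝ) :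
    decayKernel m x y ≤ ∑' k : ℕ, 8 * 2⁻¹ ^ k *
      (Metric.closedBall x ((2 : ℝ) ^ (k - m))).indicator
        (fun _ => (volume (Metric.closedBall x ((2 : ℝ) ^ (k - m))))⁻¹) y := by
  obtain ⟨k, hk, hdecay⟩ := exists_le_two_pow_and_inv_sq_le (u := 2 ^ m * |x - y|) (by positivity)
  refine le_trans ?_ (ENNReal.le_tsum k)
  have hmem : y ∈ Metric.closedBall x ((2 : ℝ) ^ (k - m)) := by
    rw [Metric.mem_closedBall', Real.dist_eq, zpow_sub₀ two_ne_zero, zpow_natCast,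
      le_div_iff₀ (by positivity)]
    linarith
  rw [Set.indicator_of_mem hmem, Real.volume_closedBall,
    ← ENNReal.ofReal_inv_of_pos (by positivity), ← ENNReal.ofReal_ofNat 8,
    ← ENNReal.ofReal_ofNat 2, ← ENNReal.ofReal_inv_of_pos two_pos,
    ← ENNReal.ofReal_pow (by positivity), ← ENNReal.ofReal_mul (by positivity),
    ← ENNReal.ofReal_mul (by positivity)]
  refine ENNReal.ofReal_le_ofReal ?_
  calc (2 : ℝ) ^ m / (1 + 2 ^ m * |x - y|) ^ 2
      = 2 ^ m * (1 / (1 + 2 ^ m * |x - y|) ^ 2) := by ring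
    _ ≤ 2 ^ m * (4 * (2 ^ k)⁻¹ ^ 2) := by gcongr
    _ = _ := by
      rw [zpow_sub₀ two_ne_zero, zpow_natCast]
      rw [inv_pow, inv_pow]
      field_simp
      norm_num

lemma kernelOp_decayKernel_le_maximalFun (m : ℤ) {h : ℝ → ℝ≥0∞} (hh : Measurable h) (x : ℝ) :
    kernelOp volume (decayKernel m) h x ≤ 16 * maximalFun h x := by
  set B : ℕ → Set ℝ := fun k => Metric.closedBall x ((2 : ℝ) ^ (k - m))
  have hB (k) : MeasurableSet (B k) := Metric.isClosed_closedBall.measurableSet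
  calc kernelOp volume (decayKernel m) h x
      ≤ ∫⁻ y, ∑' k : ℕ, 8 * 2⁻¹ ^ k * (B k).indicator (fun y => (volume (B k))⁻¹ * h y) y := by
        refine lintegral_mono fun y => ?_
        simp only [Set.indicator_mul_left, ← mul_assoc, ENNReal.tsum_mul_right]
        gcongr
        exact decayKernel_le_tsum m x y
    _ = ∑' k : ℕ, 8 * 2⁻¹ ^ k * ⨍⁻ y in B k, h y ∂volume := by
        rw [lintegral_tsum fun k =>
          (((hh.const_mul _).indicator (hB k)).const_mul _).aemeasurable]
        refine tsum_congr fun k => ?_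
        rw [lintegral_const_mul _ ((hh.const_mul _).indicator (hB k)), lintegral_indicator (hB k),
          lintegral_const_mul _ hh, setLAverage_eq, ENNReal.div_eq_inv_mul]
    _ ≤ ∑' k : ℕ, 8 * 2⁻¹ ^ k * maximalFun h x := by
        gcongr with k
        exact le_iSup (fun n : ℤ => ⨍⁻ y in Metric.closedBall x ((2 : ℝ) ^ n), h y ∂volume) (k - m)
    _ = _ := by
        rw [ENNReal.tsum_mul_right, ENNReal.tsum_mul_left, ENNReal.tsum_geometric,
          ENNReal.one_sub_inv_two, inv_inv]
        norm_num

theorem isMaximalKernelFamily_decayKernel : IsMaximalKernelFamily volume decayKernel 16 where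
  measurable := measurable_decayKernel
  symm m x y := by rw [decayKernel, decayKernel, abs_sub_comm]
  kernelOp_one_le m x := by
    simpa [maximalFun_one] using
      kernelOp_decayKernel_le_maximalFun m (h := fun _ => 1) measurable_const x
  exists_maximal_le t ht := by
    refine ⟨16 ^ t * (Real.toNNReal (t / (t - 1)) * 10 * 2 ^ (t - 1)), fun w hw => ?_⟩
    calc ∫⁻ x, (⨆ m, kernelOp volume (decayKernel m) w x) ^ t
        ≤ ∫⁻ x, 16 ^ t * maximalFun w x ^ t := by
          refine lintegral_mono fun x => ?_
          rw [← ENNReal.mul_rpow_of_nonneg _ _ (by linarith)]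
          gcongr
          exact iSup_le fun m => kernelOp_decayKernel_le_maximalFun m hw x
      _ = 16 ^ t * ∫⁻ x, maximalFun w x ^ t :=
          lintegral_const_mul' _ _ (by simp)
      _ ≤ 16 ^ t * (ENNReal.ofReal (t / (t - 1)) * 10 * 2 ^ (t - 1) * ∫⁻ x, w x ^ t) := by
          gcongr
          exact lintegral_maximalFun_rpow_le hw ht
      _ = _ := by
          push_cast [ENNReal.coe_rpow_of_nonneg _ (show 0 ≤ t by linarith),
            ENNReal.coe_rpow_of_nonneg _ (show 0 ≤ t - 1 by linarith)]
          rw [← mul_assoc]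
          rfl

end DecayKernel

section DyadicAverage

variable {E : Type*} [NormedAddCommGroup E] [NormedSpace ℝ E]

/-- The mean of `F` over the dyadic interval `[k * 2 ^ (-m), (k + 1) * 2 ^ (-m))`. -/
def dyadicMean (m : ℤ) (F : ℝ → E) (k : ℤ) : E :=
  (2 : ℝ) ^ m • ∫ y in (k * 2 ^ (-m) : ℝ)..((k + 1) * 2 ^ (-m)), F y

/-- The conditional expectation of `F` on the dyadic intervals of length `2 ^ (-m)`. -/
def dyadicAverage (m : ℤ) (F : ℝ → E) (x : ℝ) : E :=
  dyadicMean m F ⌊2 ^ m * x⌋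

/-- The map exchanging the two halves of every dyadic interval of length `2 ^ (-m)`. It plays the
role of an independent sign change of the martingale difference of level `m`. -/
def halfSwap (m : ℤ) (x : ℝ) : ℝ :=
  if Even ⌊2 ^ (m + 1) * x⌋ then x + 2 ^ (-(m + 1)) else x - 2 ^ (-(m + 1))

lemma measurable_floor_mul (c : ℝ) : Measurable fun x : ℝ => ⌊c * x⌋ :=
  (measurable_const_mul c).floor

lemma measurable_dyadicAverage [MeasurableSpace E] (m : ℤ) (F : ℝ → E) :
    Measurable (dyadicAverage m F) :=
  (measurable_of_countable (dyadicMean m F)).comp (measurable_floor_mul _)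

lemma dyadicMean_add_dyadicMean (m : ℤ) {F : ℝ → E} (hF : Continuous F) (k : ℤ) :
    dyadicMean (m + 1) F (2 * k) + dyadicMean (m + 1) F (2 * k + 1) =
      (2 : ℝ) • dyadicMean m F k := by
  have hhalf : (2 : ℝ) ^ (-(m + 1)) = 2 ^ (-m) / 2 := by
    rw [neg_add, zpow_add₀ two_ne_zero, zpow_neg_one, div_eq_mul_inv]
  have hleft : ((2 * k : ℤ) : ℝ) * 2 ^ (-(m + 1)) = k * 2 ^ (-m) := by
    rw [hhalf]
    push_cast
    ring
  have hmid : ((2 * k + 1 : ℤ) : ℝ) = ((2 * k : ℤ) : ℝ) + 1 := by push_cast; ring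
  have hright : (((2 * k : ℤ) : ℝ) + 1 + 1) * 2 ^ (-(m + 1)) = (k + 1) * 2 ^ (-m) := by
    rw [hhalf]
    push_cast
    ring
  simp only [dyadicMean]
  rw [← smul_add, hmid, intervalIntegral.integral_add_adjacent_intervals
    (hF.intervalIntegrable _ _) (hF.intervalIntegrable _ _), hleft, hright, smul_smul,
    zpow_add_one₀ two_ne_zero, mul_comm]

lemma floor_two_zpow_mul_add (m : ℤ) (x : ℝ) :
    ⌊(2 : ℝ) ^ m * (x + 2 ^ (-m))⌋ = ⌊(2 : ℝ) ^ m * x⌋ + 1 := by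
  rw [mul_add, ← zpow_add₀ two_ne_zero, add_neg_cancel, zpow_zero, Int.floor_add_one]

lemma floor_two_zpow_mul_sub (m : ℤ) (x : ℝ) :
    ⌊(2 : ℝ) ^ m * (x - 2 ^ (-m))⌋ = ⌊(2 : ℝ) ^ m * x⌋ - 1 := by
  rw [mul_sub, ← zpow_add₀ two_ne_zero, add_neg_cancel, zpow_zero, Int.floor_sub_one]

lemma floor_halfSwap_of_even {m : ℤ} {x : ℝ} (h : Even ⌊(2 : ℝ) ^ (m + 1) * x⌋) :
    ⌊(2 : ℝ) ^ (m + 1) * halfSwap m x⌋ = ⌊(2 : ℝ) ^ (m + 1) * x⌋ + 1 := by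
  rw [halfSwap, if_pos h, floor_two_zpow_mul_add]

lemma floor_halfSwap_of_not_even {m : ℤ} {x : ℝ} (h : ¬ Even ⌊(2 : ℝ) ^ (m + 1) * x⌋) :
    ⌊(2 : ℝ) ^ (m + 1) * halfSwap m x⌋ = ⌊(2 : ℝ) ^ (m + 1) * x⌋ - 1 := by
  rw [halfSwap, if_neg h, floor_two_zpow_mul_sub]

lemma floor_two_zpow_mul_eq_ediv (m : ℤ) (j : ℕ) (x : ℝ) :
    ⌊(2 : ℝ) ^ m * x⌋ = ⌊(2 : ℝ) ^ (m + j) * x⌋ / 2 ^ j := by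
  have hdiv := Int.floor_div_natCast ((2 : ℝ) ^ (m + j) * x) (2 ^ j)
  push_cast at hdiv
  rw [← hdiv, zpow_add₀ two_ne_zero, zpow_natCast]
  congr 1
  field_simp

lemma floor_two_zpow_mul_halfSwap {m m' : ℤ} (hm : m' ≤ m) (x : ℝ) :
    ⌊(2 : ℝ) ^ m' * halfSwap m x⌋ = ⌊(2 : ℝ) ^ m' * x⌋ := by
  obtain ⟨j, hj⟩ := Int.eq_ofNat_of_zero_le (sub_nonneg.2 hm)
  have hlevel : m' + ((j + 1 : ℕ) : ℤ) = m + 1 := by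
    push_cast
    linarith
  rw [floor_two_zpow_mul_eq_ediv m' (j + 1), floor_two_zpow_mul_eq_ediv m' (j + 1) x, hlevel,
    pow_succ', ← Int.ediv_ediv_of_nonneg zero_le_two, ← Int.ediv_ediv_of_nonneg zero_le_two]
  congr 1
  rcases em (Even ⌊(2 : ℝ) ^ (m + 1) * x⌋) with h | h
  · rw [floor_halfSwap_of_even h]
    obtain ⟨r, hr⟩ := h
    omega
  · rw [floor_halfSwap_of_not_even h]
    rw [Int.not_even_iff] at h
    omega

lemma dyadicAverage_halfSwap {m m' : ℤ} (hm : m' ≤ m) (F : ℝ → E) (x : ℝ) :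
    dyadicAverage m' F (halfSwap m x) = dyadicAverage m' F x := by
  rw [dyadicAverage, floor_two_zpow_mul_halfSwap hm, dyadicAverage]

lemma dyadicAverage_succ_halfSwap_add (m : ℤ) {F : ℝ → E} (hF : Continuous F) (x : ℝ) :
    dyadicAverage (m + 1) F (halfSwap m x) + dyadicAverage (m + 1) F x =
      (2 : ℝ) • dyadicAverage m F x := by
  have hlevel := floor_two_zpow_mul_eq_ediv m 1 x
  simp only [Nat.cast_one, pow_one] at hlevel
  rw [dyadicAverage, dyadicAverage, dyadicAverage, hlevel, ← dyadicMean_add_dyadicMean m hF]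
  rcases em (Even ⌊(2 : ℝ) ^ (m + 1) * x⌋) with h | h
  · rw [floor_halfSwap_of_even h, Int.two_mul_ediv_two_of_even h, add_comm]
  · rw [floor_halfSwap_of_not_even h, Int.not_even_iff] at *
    rw [show 2 * (⌊(2 : ℝ) ^ (m + 1) * x⌋ / 2) = ⌊(2 : ℝ) ^ (m + 1) * x⌋ - 1 by omega,
      sub_add_cancel]

lemma measurableSet_even_floor (c : ℝ) : MeasurableSet {x : ℝ | Even ⌊c * x⌋} :=
  measurable_floor_mul c (Set.to_countable {n : ℤ | Even n}).measurableSet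

lemma measurable_halfSwap (m : ℤ) : Measurable (halfSwap m) :=
  Measurable.ite (measurableSet_even_floor _) (measurable_id.add_const _)
    (measurable_id.sub_const _)

lemma measurePreserving_halfSwap (m : ℤ) : MeasurePreserving (halfSwap m) volume volume := by
  refine ⟨measurable_halfSwap m, Measure.ext fun A hA => ?_⟩
  set S : Set ℝ := {x | Even ⌊(2 : ℝ) ^ (m + 1) * x⌋}
  have hS : MeasurableSet S := measurableSet_even_floor _
  have hadd (x : ℝ) : x + 2 ^ (-(m + 1)) ∈ S ↔ x ∉ S := by
    rw [Set.mem_ofPred_eq, floor_two_zpow_mul_add, Int.even_add_one]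
    rfl
  have hsub (x : ℝ) : x - 2 ^ (-(m + 1)) ∈ S ↔ x ∉ S := by
    rw [Set.mem_ofPred_eq, floor_two_zpow_mul_sub, Int.even_sub_one]
    rfl
  have heven : halfSwap m ⁻¹' A ∩ S = (fun x => x + 2 ^ (-(m + 1))) ⁻¹' (A \ S) := by
    ext x
    simp only [Set.mem_inter_iff, Set.mem_preimage, Set.mem_sdiff, hadd, not_not]
    exact and_congr_left fun hx => iff_of_eq (congrArg (· ∈ A) (if_pos hx))
  have hodd : halfSwap m ⁻¹' A \ S = (fun x => x - 2 ^ (-(m + 1))) ⁻¹' (A ∩ S) := by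
    ext x
    simp only [Set.mem_inter_iff, Set.mem_preimage, Set.mem_sdiff, hsub]
    exact and_congr_left fun hx => iff_of_eq (congrArg (· ∈ A) (if_neg hx))
  simp_rw [sub_eq_add_neg] at hodd
  rw [Measure.map_apply (measurable_halfSwap m) hA, ← measure_inter_add_sdiff _ hS, heven, hodd,
    measure_preimage_add_right, measure_preimage_add_right, add_comm,
    measure_inter_add_sdiff _ hS]

end DyadicAverage

section SchwartzConvolution

variable {V : Type*} [NormedAddCommGroup V] [InnerProductSpace ℝ V] [FiniteDimensional ℝ V]
  [MeasurableSpace V] [BorelSpace V]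

/-- The convolution product of two complex Schwartz functions. -/
def schwartzConv (f g : SchwartzMap V ℂ) : SchwartzMap V ℂ :=
  SchwartzMap.convolution (ContinuousLinearMap.mul ℂ ℂ) f g

lemma schwartzConv_apply (f g : SchwartzMap V ℂ) (x : V) :
    schwartzConv f g x = ∫ w, f w * g (x - w) :=
  SchwartzMap.convolution_apply _ f g x

lemma fourier_schwartzConv (f g : SchwartzMap V ℂ) (ξ : V) :
    𝓕 (schwartzConv f g) ξ = 𝓕 f ξ * 𝓕 g ξ := by
  rw [schwartzConv, SchwartzMap.fourier_convolution, SchwartzMap.pairing_apply_apply]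
  rfl

lemma integrable_mul_comp_sub (f g : SchwartzMap V ℂ) (x : V) :
    Integrable fun w => f w * g (x - w) := by
  refine f.integrable.mul_bdd (c := SchwartzMap.seminorm ℝ 0 0 g) ?_
    (.of_forall fun w => g.norm_le_seminorm ℝ _)
  exact (g.continuous.comp (continuous_const.sub continuous_id)).aestronglyMeasurable

lemma schwartzConv_eq_self {f g : SchwartzMap V ℂ} (h : ∀ ξ, 𝓕 f ξ ≠ 0 → 𝓕 g ξ = 1) :
    schwartzConv f g = f := by
  refine (FourierTransform.fourierEquiv ℂ (SchwartzMap V ℂ)).injective ?_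
  ext ξ
  by_cases hξ : 𝓕 f ξ = 0
  · exact (fourier_schwartzConv f g ξ).trans (by simp [hξ])
  · exact (fourier_schwartzConv f g ξ).trans (by simp [h ξ hξ])

lemma fourier_derivCLM (f : SchwartzMap ℝ ℂ) (ξ : ℝ) :
    𝓕 (SchwartzMap.derivCLM ℂ ℂ f) ξ = 2 * Real.pi * Complex.I * ξ * 𝓕 f ξ := by
  rw [SchwartzMap.fourier_coe, SchwartzMap.fourier_coe]
  exact congrFun (Real.fourier_deriv f.integrable f.differentiable
    (SchwartzMap.derivCLM ℂ ℂ f).integrable) ξ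

lemma derivCLM_schwartzConv (f g : SchwartzMap ℝ ℂ) :
    SchwartzMap.derivCLM ℂ ℂ (schwartzConv f g) =
      schwartzConv f (SchwartzMap.derivCLM ℂ ℂ g) := by
  refine (FourierTransform.fourierEquiv ℂ (SchwartzMap ℝ ℂ)).injective ?_
  ext ξ
  change 𝓕 (SchwartzMap.derivCLM ℂ ℂ (schwartzConv f g)) ξ =
    𝓕 (schwartzConv f (SchwartzMap.derivCLM ℂ ℂ g)) ξ
  rw [fourier_derivCLM, fourier_schwartzConv, fourier_schwartzConv, fourier_derivCLM]
  ring

end SchwartzConvolution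

section DyadicDilation

/-- The `L¹`-normalised dilation `x ↦ 2 ^ i * φ (2 ^ i * x)`. -/
def dyadicDilation (i : ℤ) (φ : SchwartzMap ℝ ℂ) : SchwartzMap ℝ ℂ :=
  (2 ^ i : ℝ) • SchwartzMap.compCLMOfContinuousLinearEquiv ℝ
    (ContinuousLinearEquiv.unitsEquivAut ℝ (Units.mk0 (2 ^ i) (by positivity))) φ

lemma dyadicDilation_apply (i : ℤ) (φ : SchwartzMap ℝ ℂ) (x : ℝ) :
    dyadicDilation i φ x = (2 ^ i : ℝ) • φ (2 ^ i * x) := by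
  simp [dyadicDilation, mul_comm]

lemma derivCLM_dyadicDilation (i : ℤ) (φ : SchwartzMap ℝ ℂ) :
    SchwartzMap.derivCLM ℂ ℂ (dyadicDilation i φ) =
      (2 ^ i : ℝ) • dyadicDilation i (SchwartzMap.derivCLM ℂ ℂ φ) := by
  ext x
  have hderiv : HasDerivAt (dyadicDilation i φ)
      ((2 ^ i : ℝ) • (2 ^ i : ℝ) • deriv φ (2 ^ i * x)) x := by
    have hlin : HasDerivAt (fun x : ℝ => 2 ^ i * x) (2 ^ i) x := by
      simpa using (hasDerivAt_id x).const_mul ((2 : ℝ) ^ i)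
    rw [show ⇑(dyadicDilation i φ) = _ from funext (dyadicDilation_apply i φ)]
    exact (HasDerivAt.scomp x (φ.hasDerivAt _) hlin).const_smul ((2 : ℝ) ^ i)
  rw [smul_apply, dyadicDilation_apply]
  exact hderiv.deriv

lemma fourier_dyadicDilation (i : ℤ) (φ : SchwartzMap ℝ ℂ) (ξ : ℝ) :
    𝓕 (dyadicDilation i φ) ξ = 𝓕 φ ((2 ^ i)⁻¹ * ξ) := by
  have hs : (0 : ℝ) < 2 ^ i := by positivity
  set F : ℝ → ℂ := fun u =>
    Complex.exp (↑(-2 * Real.pi * (u * ((2 ^ i)⁻¹ * ξ))) * Complex.I) • φ u with hF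
  have hint (x : ℝ) : Complex.exp (↑(-2 * Real.pi * (x * ξ)) * Complex.I) •
      dyadicDilation i φ x = (2 ^ i : ℝ) • F (2 ^ i * x) := by
    rw [dyadicDilation_apply, smul_comm, hF]
    simp only [show 2 ^ i * x * ((2 ^ i)⁻¹ * ξ) = x * ξ by field_simp]
  calc 𝓕 (dyadicDilation i φ) ξ = ∫ x, (2 ^ i : ℝ) • F (2 ^ i * x) := by
        rw [SchwartzMap.fourier_coe, Real.fourier_eq']
        simp only [Real.inner_apply, hint]
    _ = ∫ u, F u := by
        rw [integral_smul, Measure.integral_comp_mul_left, smul_smul, abs_of_pos (by positivity),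
          mul_inv_cancel₀ hs.ne', one_smul]
    _ = 𝓕 φ ((2 ^ i)⁻¹ * ξ) := by
        rw [SchwartzMap.fourier_coe, Real.fourier_eq']
        simp only [Real.inner_apply, hF]

end DyadicDilation

section Kernel

lemma contDiff_mul_inv_of_eventuallyEq_zero {g : ℝ → ℝ} (hg : ContDiff ℝ (⊤ : ℕ∞) g)
    (h0 : g =ᶠ[nhds 0] 0) : ContDiff ℝ (⊤ : ℕ∞) fun x => g x * x⁻¹ := by
  refine contDiff_iff_contDiffAt.mpr fun x => ?_
  rcases eq_or_ne x 0 with rfl | hx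
  · exact (contDiffAt_const (c := (0 : ℝ))).congr_of_eventuallyEq
      (h0.mono fun y hy => by simp [hy])
  · exact hg.contDiffAt.mul (contDiffAt_inv ℝ hx)

lemma exists_schwartzMap_eq_inv {a b : ℝ} (ha : 0 < a) (hb : 0 < b) :
    ∃ χ : SchwartzMap ℝ ℂ, ∀ ξ : ℝ, a < |ξ| → |ξ| < b → χ ξ = (ξ : ℂ)⁻¹ := by
  let outer : ContDiffBump (0 : ℝ) := ⟨b, b + 1, hb, by linarith⟩
  let inner : ContDiffBump (0 : ℝ) := ⟨a / 2, a, by linarith, by linarith⟩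
  have hsmooth : ContDiff ℝ (⊤ : ℕ∞) fun ξ => ((outer ξ * (1 - inner ξ) * ξ⁻¹ : ℝ) : ℂ) := by
    refine Complex.ofRealCLM.contDiff.comp (contDiff_mul_inv_of_eventuallyEq_zero
      (outer.contDiff.mul (contDiff_const.sub inner.contDiff)) ?_)
    exact inner.eventuallyEq_one.mono fun ξ hξ => by simp [hξ]
  have hcompact : HasCompactSupport fun ξ => ((outer ξ * (1 - inner ξ) * ξ⁻¹ : ℝ) : ℂ) :=
    (outer.hasCompactSupport.mul_right.mul_right).comp_left Complex.ofReal_zero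
  refine ⟨hcompact.toSchwartzMap hsmooth, fun ξ haξ hξb => ?_⟩
  have houter : outer ξ = 1 := outer.one_of_mem_closedBall (by simp [outer, hξb.le])
  have hinner : inner ξ = 0 := inner.zero_of_le_dist (by simp [inner, haξ.le])
  simp [houter, hinner]

lemma exists_fourier_derivCLM_eq_one {a b : ℝ} (ha : 0 < a) (hb : 0 < b) :
    ∃ ψ : SchwartzMap ℝ ℂ, ∀ ξ : ℝ, a < |ξ| → |ξ| < b →
      𝓕 (SchwartzMap.derivCLM ℂ ℂ ψ) ξ = 1 := by
  obtain ⟨χ, hχ⟩ := exists_schwartzMap_eq_inv ha hb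
  refine ⟨𝓕⁻ ((2 * Real.pi * Complex.I)⁻¹ • χ), fun ξ haξ hξb => ?_⟩
  have hξ : (ξ : ℂ) ≠ 0 := Complex.ofReal_ne_zero.mpr (abs_pos.mp (ha.trans haξ))
  rw [fourier_derivCLM, FourierTransform.fourier_fourierInv_eq, smul_apply, hχ ξ haξ hξb,
    smul_eq_mul, mul_mul_mul_comm, mul_inv_cancel₀ Complex.two_pi_I_ne_zero, mul_inv_cancel₀ hξ,
    one_mul]

end Kernel

section KernelEstimates

lemma exists_norm_le_div_one_add_abs_sq (g : SchwartzMap ℝ ℂ) :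
    ∃ C : ℝ≥0, ∀ z, ‖g z‖ ≤ C / (1 + |z|) ^ 2 := by
  obtain ⟨C₀, h0, hC₀⟩ := g.decay 0 0
  obtain ⟨C₂, h2, hC₂⟩ := g.decay 2 0
  refine ⟨⟨2 * (C₀ + C₂), by positivity⟩, fun z => ?_⟩
  have hz₀ := hC₀ z
  have hz₂ := hC₂ z
  simp only [pow_zero, one_mul, norm_iteratedFDeriv_zero, Real.norm_eq_abs] at hz₀ hz₂
  rw [le_div_iff₀ (by positivity)]
  calc ‖g z‖ * (1 + |z|) ^ 2 ≤ ‖g z‖ * (2 * (1 + |z| ^ 2)) := by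
        gcongr
        nlinarith [sq_nonneg (1 - |z|)]
    _ = 2 * (‖g z‖ + |z| ^ 2 * ‖g z‖) := by ring
    _ ≤ 2 * (C₀ + C₂) := by gcongr

lemma exists_norm_sub_le_mul_div_one_add_abs_sq (g : SchwartzMap ℝ ℂ) :
    ∃ C : ℝ≥0, ∀ a b : ℝ, |a - b| ≤ 1 → ‖g a - g b‖ ≤ C * |a - b| / (1 + |b|) ^ 2 := by
  obtain ⟨C, hC⟩ := exists_norm_le_div_one_add_abs_sq (SchwartzMap.derivCLM ℂ ℂ g)
  refine ⟨4 * C, fun a b hab => ?_⟩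
  have hderiv (x : ℝ) (hx : x ∈ Set.uIcc b a) : ‖deriv g x‖ ≤ 4 * C / (1 + |b|) ^ 2 := by
    have hxb : |x - b| ≤ 1 := (Set.abs_sub_left_of_mem_uIcc hx).trans hab
    have hb : 1 + |b| ≤ 2 * (1 + |x|) := by
      have hbx := abs_sub_abs_le_abs_sub b x
      rw [abs_sub_comm] at hbx
      linarith [abs_nonneg x]
    calc ‖deriv g x‖ ≤ C / (1 + |x|) ^ 2 := hC x
      _ = 4 * C / (2 * (1 + |x|)) ^ 2 := by
        field_simp
        norm_num
      _ ≤ 4 * C / (1 + |b|) ^ 2 := by gcongr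
  calc ‖g a - g b‖ ≤ 4 * C / (1 + |b|) ^ 2 * ‖a - b‖ :=
        Convex.norm_image_sub_le_of_norm_hasDerivWithin_le
          (fun x _ => (g.hasDerivAt x).hasDerivWithinAt) hderiv (convex_uIcc b a)
          Set.left_mem_uIcc Set.right_mem_uIcc
    _ = _ := by
      rw [Real.norm_eq_abs]
      push_cast
      ring

lemma exists_enorm_dyadicDilation_le (φ : SchwartzMap ℝ ℂ) :
    ∃ C : ℝ≥0, ∀ (i : ℤ) (x w : ℝ), ‖dyadicDilation i φ (x - w)‖ₑ ≤ C * decayKernel i x w := by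
  obtain ⟨C, hC⟩ := exists_norm_le_div_one_add_abs_sq φ
  refine ⟨C, fun i x w => ?_⟩
  have hs : (0 : ℝ) < 2 ^ i := by positivity
  rw [decayKernel, ← ENNReal.ofReal_coe_nnreal, ← ENNReal.ofReal_mul C.coe_nonneg, ← ofReal_norm,
    dyadicDilation_apply, norm_smul, Real.norm_of_nonneg hs.le]
  refine ENNReal.ofReal_le_ofReal ?_
  calc 2 ^ i * ‖φ (2 ^ i * (x - w))‖ ≤ 2 ^ i * (C / (1 + |2 ^ i * (x - w)|) ^ 2) := by
        gcongr
        exact hC _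
    _ = _ := by
        rw [abs_mul, abs_of_pos hs]
        ring

lemma exists_enorm_dyadicDilation_sub_le (φ : SchwartzMap ℝ ℂ) :
    ∃ C : ℝ≥0, ∀ (i m : ℤ), i ≤ m → ∀ x y w : ℝ, |y - x| ≤ 2 ^ (-m) →
      ‖dyadicDilation i φ (y - w) - dyadicDilation i φ (x - w)‖ₑ ≤
        C * ENNReal.ofReal (2 ^ (i - m)) * decayKernel i x w := by
  obtain ⟨C, hC⟩ := exists_norm_sub_le_mul_div_one_add_abs_sq φ
  refine ⟨C, fun i m him x y w hxy => ?_⟩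
  have hs : (0 : ℝ) < 2 ^ i := by positivity
  have hdist : |2 ^ i * (y - w) - 2 ^ i * (x - w)| ≤ (2 : ℝ) ^ (i - m) := by
    rw [← mul_sub, abs_mul, abs_of_pos hs, sub_sub_sub_cancel_right, sub_eq_add_neg i,
      zpow_add₀ two_ne_zero]
    gcongr
  have hone : (2 : ℝ) ^ (i - m) ≤ 1 := zpow_le_one_of_nonpos₀ one_le_two (by linarith)
  rw [decayKernel, ← ENNReal.ofReal_coe_nnreal, ← ENNReal.ofReal_mul C.coe_nonneg,
    ← ENNReal.ofReal_mul (by positivity), ← ofReal_norm, dyadicDilation_apply,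
    dyadicDilation_apply, ← smul_sub, norm_smul, Real.norm_of_nonneg hs.le]
  refine ENNReal.ofReal_le_ofReal ?_
  calc 2 ^ i * ‖φ (2 ^ i * (y - w)) - φ (2 ^ i * (x - w))‖
      ≤ 2 ^ i * (C * |2 ^ i * (y - w) - 2 ^ i * (x - w)| / (1 + |2 ^ i * (x - w)|) ^ 2) := by
        gcongr
        exact hC _ _ (hdist.trans hone)
    _ ≤ 2 ^ i * (C * 2 ^ (i - m) / (1 + |2 ^ i * (x - w)|) ^ 2) := by gcongr
    _ = _ := by
        rw [abs_mul, abs_of_pos hs]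
        ring

lemma decayKernel_le_of_abs_sub_le {m i : ℤ} (him : m ≤ i) {x c : ℝ} (hc : |c - x| ≤ 2 ^ (-m))
    (w : ℝ) :
    decayKernel i c w ≤ 4 * ENNReal.ofReal (2 ^ (i - m)) * decayKernel m x w := by
  have hmi : (2 : ℝ) ^ m ≤ 2 ^ i := zpow_le_zpow_right₀ one_le_two him
  have hdist : 1 + 2 ^ m * |x - w| ≤ 2 * (1 + 2 ^ i * |c - w|) :=
    calc 1 + 2 ^ m * |x - w| ≤ 1 + 2 ^ m * (|c - x| + |c - w|) := by
          gcongr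
          rw [abs_sub_comm c x]
          exact abs_sub_le x c w
      _ ≤ 1 + (2 ^ m * 2 ^ (-m) + 2 ^ i * |c - w|) := by
          rw [mul_add]
          gcongr
      _ ≤ _ := by
          rw [← zpow_add₀ two_ne_zero, add_neg_cancel, zpow_zero]
          have hnonneg : 0 ≤ 2 ^ i * |c - w| := by positivity
          linarith
  rw [decayKernel, decayKernel, ← ENNReal.ofReal_ofNat 4, ← ENNReal.ofReal_mul (by positivity),
    ← ENNReal.ofReal_mul (by positivity)]
  refine ENNReal.ofReal_le_ofReal ?_
  calc (2 : ℝ) ^ i / (1 + 2 ^ i * |c - w|) ^ 2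
      = 4 * 2 ^ i / (2 * (1 + 2 ^ i * |c - w|)) ^ 2 := by
        field_simp
        norm_num
    _ ≤ 4 * 2 ^ i / (1 + 2 ^ m * |x - w|) ^ 2 := by gcongr
    _ = _ := by
        rw [zpow_sub₀ two_ne_zero]
        field_simp

lemma kernelOp_decayKernel_le_of_abs_sub_le {m i : ℤ} (him : m ≤ i) {x c : ℝ}
    (hc : |c - x| ≤ 2 ^ (-m)) (h : ℝ → ℝ≥0∞) :
    kernelOp volume (decayKernel i) h c ≤
      4 * ENNReal.ofReal (2 ^ (i - m)) * kernelOp volume (decayKernel m) h x := by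
  rw [kernelOp, kernelOp, ← lintegral_const_mul' _ _ (by finiteness)]
  refine lintegral_mono fun w => ?_
  rw [← mul_assoc]
  gcongr
  exact decayKernel_le_of_abs_sub_le him hc w

lemma enorm_integral_mul_le_kernelOp {X : Type*} [MeasurableSpace X] {μ : Measure X}
    {k : X → X → ℝ≥0∞} {f g : X → ℂ} {c : ℝ≥0∞} (hc : c ≠ ∞) (x : X)
    (hg : ∀ w, ‖g w‖ₑ ≤ c * k x w) :
    ‖∫ w, f w * g w ∂μ‖ₑ ≤ c * kernelOp μ k (fun w => ‖f w‖ₑ) x := by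
  rw [kernelOp, ← lintegral_const_mul' _ _ hc]
  refine (enorm_integral_le_lintegral_enorm _).trans (lintegral_mono fun w => ?_)
  rw [enorm_mul, mul_comm, ← mul_assoc]
  gcongr
  exact hg w

end KernelEstimates

section DyadicApproximation

variable {E : Type*} [NormedAddCommGroup E] [NormedSpace ℝ E] {F G : ℝ → E} {D : ℝ≥0∞} {m i : ℤ}

lemma floor_mul_zpow_neg_le (m : ℤ) (x : ℝ) : ⌊(2 : ℝ) ^ m * x⌋ * (2 : ℝ) ^ (-m) ≤ x := by
  rw [zpow_neg, mul_inv_le_iff₀' (by positivity)]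
  exact Int.floor_le _

lemma le_floor_add_one_mul_zpow_neg (m : ℤ) (x : ℝ) :
    x ≤ (⌊(2 : ℝ) ^ m * x⌋ + 1) * (2 : ℝ) ^ (-m) := by
  rw [zpow_neg, le_mul_inv_iff₀' (by positivity)]
  exact (Int.lt_floor_add_one _).le

lemma abs_sub_le_zpow_neg_of_mem_Icc {x y : ℝ}
    (hy : y ∈ Set.Icc (⌊(2 : ℝ) ^ m * x⌋ * (2 : ℝ) ^ (-m))
      ((⌊(2 : ℝ) ^ m * x⌋ + 1) * (2 : ℝ) ^ (-m))) : |y - x| ≤ 2 ^ (-m) := by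
  obtain ⟨hay, hyb⟩ := hy
  have hax := floor_mul_zpow_neg_le m x
  have hxb := le_floor_add_one_mul_zpow_neg m x
  rw [add_one_mul] at hyb hxb
  exact abs_le.mpr ⟨by linarith, by linarith⟩

lemma dyadicAverage_finsetSum {ι : Type*} (T : Finset ι) {f : ι → ℝ → E}
    (hf : ∀ i ∈ T, Continuous (f i)) (m : ℤ) (x : ℝ) :
    dyadicAverage m (fun y => ∑ i ∈ T, f i y) x = ∑ i ∈ T, dyadicAverage m (f i) x := by
  simp only [dyadicAverage, dyadicMean]
  rw [intervalIntegral.integral_finsetSum fun i hi => (hf i hi).intervalIntegrable _ _,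
    Finset.smul_sum]

lemma sub_dyadicAverage [CompleteSpace E] (hF : Continuous F) (m : ℤ) (x : ℝ) :
    F x - dyadicAverage m F x = dyadicAverage m (fun y => F x - F y) x := by
  simp only [dyadicAverage, dyadicMean]
  rw [intervalIntegral.integral_sub (by simp) (hF.intervalIntegrable _ _),
    intervalIntegral.integral_const, ← sub_mul, add_sub_cancel_left, one_mul, smul_sub, smul_smul,
    ← zpow_add₀ two_ne_zero, add_neg_cancel, zpow_zero, one_smul]

lemma enorm_dyadicAverage_le {x : ℝ} (h : ∀ y, |y - x| ≤ 2 ^ (-m) → ‖F y‖ₑ ≤ D) :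
    ‖dyadicAverage m F x‖ₑ ≤ D := by
  by_cases hD : D = ∞
  · simp [hD]
  have hle : ⌊(2 : ℝ) ^ m * x⌋ * (2 : ℝ) ^ (-m) ≤ (⌊(2 : ℝ) ^ m * x⌋ + 1) * 2 ^ (-m) :=
    (floor_mul_zpow_neg_le m x).trans (le_floor_add_one_mul_zpow_neg m x)
  have hbound (y : ℝ) (hy : y ∈ Set.uIoc (⌊(2 : ℝ) ^ m * x⌋ * (2 : ℝ) ^ (-m))
      ((⌊(2 : ℝ) ^ m * x⌋ + 1) * 2 ^ (-m))) : ‖F y‖ ≤ D.toReal := by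
    rw [Set.uIoc_of_le hle] at hy
    rw [← toReal_enorm]
    exact ENNReal.toReal_mono hD (h y (abs_sub_le_zpow_neg_of_mem_Icc (Set.Ioc_subset_Icc_self hy)))
  rw [← ofReal_norm, dyadicAverage, dyadicMean, norm_smul, norm_zpow, Real.norm_ofNat]
  refine ENNReal.ofReal_le_of_le_toReal ?_
  calc _ ≤ (2 : ℝ) ^ m * (D.toReal * |(⌊(2 : ℝ) ^ m * x⌋ + 1) * (2 : ℝ) ^ (-m) -
        ⌊(2 : ℝ) ^ m * x⌋ * (2 : ℝ) ^ (-m)|) := by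
        gcongr
        exact intervalIntegral.norm_integral_le_of_norm_le_const hbound
    _ = D.toReal := by
        rw [← sub_mul, add_sub_cancel_left, one_mul, abs_of_pos (by positivity), mul_left_comm,
          ← zpow_add₀ two_ne_zero, add_neg_cancel, zpow_zero, mul_one]

lemma enorm_sub_dyadicAverage_le [CompleteSpace E] (hF : Continuous F) {x : ℝ}
    (h : ∀ y, |y - x| ≤ 2 ^ (-m) → ‖F y - F x‖ₑ ≤ D) : ‖F x - dyadicAverage m F x‖ₑ ≤ D := by
  rw [sub_dyadicAverage hF]
  refine enorm_dyadicAverage_le fun y hy => ?_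
  rw [enorm_sub_rev]
  exact h y hy

lemma enorm_dyadicAverage_le_of_hasDerivAt [CompleteSpace E] (hF : Continuous F)
    (hG : ∀ c, HasDerivAt G (F c) c) {x : ℝ} (h : ∀ c, |c - x| ≤ 2 ^ (-m) → ‖G c‖ₑ ≤ D) :
    ‖dyadicAverage m F x‖ₑ ≤ ENNReal.ofReal (2 ^ m) * (2 * D) := by
  have hle : ⌊(2 : ℝ) ^ m * x⌋ * (2 : ℝ) ^ (-m) ≤ (⌊(2 : ℝ) ^ m * x⌋ + 1) * 2 ^ (-m) :=
    (floor_mul_zpow_neg_le m x).trans (le_floor_add_one_mul_zpow_neg m x)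
  rw [dyadicAverage, dyadicMean, intervalIntegral.integral_eq_sub_of_hasDerivAt
    (fun c _ => hG c) (hF.intervalIntegrable _ _), enorm_smul,
    Real.enorm_of_nonneg (by positivity), two_mul]
  gcongr
  exact enorm_sub_le.trans (add_le_add
    (h _ (abs_sub_le_zpow_neg_of_mem_Icc (Set.right_mem_Icc.mpr hle)))
    (h _ (abs_sub_le_zpow_neg_of_mem_Icc (Set.left_mem_Icc.mpr hle))))

end DyadicApproximation

section BandLimited

variable {f φ ψ : SchwartzMap ℝ ℂ} {i m : ℤ}

lemma schwartzConv_dyadicDilation_eq_self {a b : ℝ}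
    (hφ : ∀ ξ : ℝ, a < |ξ| → |ξ| < b → 𝓕 φ ξ = 1)
    (hf : ∀ ξ : ℝ, 𝓕 f ξ ≠ 0 → 2 ^ i * a < |ξ| ∧ |ξ| < 2 ^ i * b) :
    schwartzConv f (dyadicDilation i φ) = f := by
  have hs : (0 : ℝ) < 2 ^ i := by positivity
  refine schwartzConv_eq_self fun ξ hξ => ?_
  obtain ⟨haξ, hξb⟩ := hf ξ hξ
  have habs : |(2 ^ i)⁻¹ * ξ| = (2 ^ i)⁻¹ * |ξ| := by rw [abs_mul, abs_of_pos (inv_pos.mpr hs)]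
  rw [fourier_dyadicDilation]
  refine hφ _ ?_ ?_
  · rwa [habs, lt_inv_mul_iff₀ hs]
  · rwa [habs, inv_mul_lt_iff₀ hs]

lemma exists_enorm_sub_le_kernelOp (φ : SchwartzMap ℝ ℂ) :
    ∃ C : ℝ≥0, ∀ (i m : ℤ) (f : SchwartzMap ℝ ℂ), i ≤ m →
      schwartzConv f (dyadicDilation i φ) = f → ∀ x y : ℝ, |y - x| ≤ 2 ^ (-m) →
      ‖f y - f x‖ₑ ≤
        C * ENNReal.ofReal (2 ^ (i - m)) * kernelOp volume (decayKernel i) (fun w => ‖f w‖ₑ) x := by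
  obtain ⟨C, hC⟩ := exists_enorm_dyadicDilation_sub_le φ
  refine ⟨C, fun i m f him hf x y hxy => ?_⟩
  have hrep : f y - f x =
      ∫ w, f w * (dyadicDilation i φ (y - w) - dyadicDilation i φ (x - w)) := by
    simp only [mul_sub]
    rw [integral_sub (integrable_mul_comp_sub f _ y) (integrable_mul_comp_sub f _ x),
      ← schwartzConv_apply, ← schwartzConv_apply, hf]
  rw [hrep]
  exact enorm_integral_mul_le_kernelOp (by finiteness) x fun w => hC i m him x y w hxy

lemma exists_enorm_schwartzConv_dyadicDilation_le (ψ : SchwartzMap ℝ ℂ) :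
    ∃ C : ℝ≥0, ∀ (i : ℤ) (f : SchwartzMap ℝ ℂ) (c : ℝ),
      ‖schwartzConv f (dyadicDilation i ψ) c‖ₑ ≤
        C * kernelOp volume (decayKernel i) (fun w => ‖f w‖ₑ) c := by
  obtain ⟨C, hC⟩ := exists_enorm_dyadicDilation_le ψ
  refine ⟨C, fun i f c => ?_⟩
  rw [schwartzConv_apply]
  exact enorm_integral_mul_le_kernelOp coe_ne_top c (hC i c)

lemma hasDerivAt_schwartzConv_dyadicDilation
    (hf : schwartzConv f (dyadicDilation i (SchwartzMap.derivCLM ℂ ℂ ψ)) = f) (c : ℝ) :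
    HasDerivAt (fun c => (2 ^ i : ℝ)⁻¹ • schwartzConv f (dyadicDilation i ψ) c) (f c) c := by
  have hderiv : SchwartzMap.derivCLM ℂ ℂ (schwartzConv f (dyadicDilation i ψ)) c =
      (2 ^ i : ℝ) • f c := by
    conv_rhs => rw [← hf]
    simp only [derivCLM_schwartzConv, derivCLM_dyadicDilation, schwartzConv_apply, smul_apply,
      mul_smul_comm, integral_smul]
  have hmain := ((schwartzConv f (dyadicDilation i ψ)).hasDerivAt c).const_smul (2 ^ i : ℝ)⁻¹
  rw [SchwartzMap.derivCLM_apply] at hderiv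
  rwa [hderiv, inv_smul_smul₀ (by positivity)] at hmain

lemma kernelOp_decayKernel_le_rpow_inv {r : ℝ} (hr : 1 ≤ r) (m : ℤ) {h : ℝ → ℝ≥0∞}
    (hh : Measurable h) (x : ℝ) :
    kernelOp volume (decayKernel m) h x ≤
      16 * kernelOp volume (decayKernel m) (fun y => h y ^ r) x ^ r⁻¹ := by
  have hr0 : 0 < r := by linarith
  rw [← ENNReal.rpow_le_rpow_iff hr0, ENNReal.mul_rpow_of_nonneg _ _ hr0.le,
    ENNReal.rpow_inv_rpow hr0.ne']
  refine (isMaximalKernelFamily_decayKernel.kernelOp_rpow_le m hh hr x).trans ?_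
  gcongr
  exact ENNReal.rpow_le_rpow_of_exponent_le (by norm_num) (by linarith)

lemma exists_enorm_dyadicAverage_le_kernelOp (ψ : SchwartzMap ℝ ℂ) :
    ∃ C : ℝ≥0, ∀ (i m : ℤ) (f : SchwartzMap ℝ ℂ), m ≤ i →
      schwartzConv f (dyadicDilation i (SchwartzMap.derivCLM ℂ ℂ ψ)) = f →
      ∀ r : ℝ, 1 ≤ r → ∀ x : ℝ,
      ‖dyadicAverage m f x‖ₑ ≤ C * ENNReal.ofReal (2 ^ (m - i)) * (ENNReal.ofReal (2 ^ (i - m)) *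
        kernelOp volume (decayKernel m) (fun w => ‖f w‖ₑ ^ r) x) ^ r⁻¹ := by
  obtain ⟨C, hC⟩ := exists_enorm_schwartzConv_dyadicDilation_le ψ
  refine ⟨128 * C, fun i m f hmi hf r hr x => ?_⟩
  have hr0 : 0 ≤ r⁻¹ := inv_nonneg.mpr (by linarith)
  have hf_meas : Measurable fun w => ‖f w‖ₑ := f.continuous.enorm.measurable
  set K := ENNReal.ofReal (2 ^ (i - m)) *
    kernelOp volume (decayKernel m) (fun w => ‖f w‖ₑ ^ r) x with hK
  have hfour : (4 : ℝ≥0∞) ^ r⁻¹ ≤ 4 :=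
    (ENNReal.rpow_le_rpow_of_exponent_le (by norm_num) (inv_le_one_of_one_le₀ hr)).trans_eq
      (ENNReal.rpow_one 4)
  have hprim (c : ℝ) (hc : |c - x| ≤ 2 ^ (-m)) :
      ‖(2 ^ i : ℝ)⁻¹ • schwartzConv f (dyadicDilation i ψ) c‖ₑ ≤
        ENNReal.ofReal (2 ^ i)⁻¹ * (C * (16 * (4 * K ^ r⁻¹))) := by
    rw [enorm_smul, Real.enorm_of_nonneg (by positivity)]
    gcongr
    refine (hC i f c).trans (mul_le_mul_right ((kernelOp_decayKernel_le_rpow_inv hr i hf_meas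
      c).trans (mul_le_mul_right ?_ _)) _)
    calc kernelOp volume (decayKernel i) (fun w => ‖f w‖ₑ ^ r) c ^ r⁻¹ ≤ (4 * K) ^ r⁻¹ := by
          rw [hK, ← mul_assoc]
          gcongr
          exact kernelOp_decayKernel_le_of_abs_sub_le hmi hc _
      _ ≤ 4 * K ^ r⁻¹ := by
          rw [ENNReal.mul_rpow_of_nonneg _ _ hr0]
          gcongr
  refine (enorm_dyadicAverage_le_of_hasDerivAt f.continuous
    (hasDerivAt_schwartzConv_dyadicDilation hf) hprim).trans_eq ?_
  rw [sub_eq_add_neg m, zpow_add₀ two_ne_zero, zpow_neg, ENNReal.ofReal_mul (by positivity)]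
  push_cast
  ring

end BandLimited

section DyadicError

/-- The contribution of a function `f` of frequency about `2 ^ i` to the error made in replacing
the partial sum up to level `m` by the dyadic average of level `m`: the partial sum contains `f`
if and only if `i ≤ m`. -/
def dyadicError (m i : ℤ) (f : ℝ → ℂ) (x : ℝ) : ℝ≥0∞ :=
  if i ≤ m then ‖f x - dyadicAverage m f x‖ₑ else ‖dyadicAverage m f x‖ₑ

/-- The weight `2 ^ (-ε |n|)`, by which an error contribution decays in the distance `n` between its
frequency and the level of the average. -/
def dyadicWeight (ε : ℝ) (n : ℤ) : ℝ≥0∞ := 2 ^ (-(ε * |(n : ℝ)|))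

lemma ofReal_two_zpow (n : ℤ) : ENNReal.ofReal (2 ^ n) = 2 ^ (n : ℝ) := by
  rw [← Real.rpow_intCast, ← ENNReal.ofReal_rpow_of_pos two_pos, ENNReal.ofReal_ofNat]

lemma ofReal_two_zpow_le_dyadicWeight {ε : ℝ} (hε : ε ≤ 1) {i m : ℤ} (him : i ≤ m) :
    ENNReal.ofReal (2 ^ (i - m)) ≤ dyadicWeight ε (m - i) := by
  have him' : (i : ℝ) ≤ m := by exact_mod_cast him
  rw [ofReal_two_zpow, dyadicWeight]
  refine ENNReal.rpow_le_rpow_of_exponent_le one_le_two ?_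
  push_cast
  rw [abs_of_nonneg (by linarith)]
  nlinarith

lemma ofReal_two_zpow_mul_rpow_inv (r : ℝ) {i m : ℤ} (hmi : m ≤ i) :
    ENNReal.ofReal (2 ^ (m - i)) * ENNReal.ofReal (2 ^ (i - m)) ^ r⁻¹ =
      dyadicWeight (1 - r⁻¹) (m - i) := by
  have hmi' : (m : ℝ) ≤ i := by exact_mod_cast hmi
  rw [ofReal_two_zpow, ofReal_two_zpow, dyadicWeight, ← ENNReal.rpow_mul,
    ← ENNReal.rpow_add _ _ two_ne_zero ofNat_ne_top]
  push_cast
  rw [abs_of_nonpos (by linarith)]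
  ring_nf

lemma exists_dyadicError_le (a b : ℝ) (ha : 0 < a) (hb : 0 < b) :
    ∃ C : ℝ≥0, ∀ (i : ℤ) (f : SchwartzMap ℝ ℂ),
      (∀ ξ : ℝ, 𝓕 f ξ ≠ 0 → 2 ^ i * a < |ξ| ∧ |ξ| < 2 ^ i * b) →
      ∀ r : ℝ, 1 ≤ r → ∀ (m : ℤ) (x : ℝ),
      dyadicError m i f x ≤ C * (dyadicWeight (1 - r⁻¹) (m - i) *
        kernelOp volume (decayKernel (min m i)) (fun w => ‖f w‖ₑ ^ r) x ^ r⁻¹) := by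
  obtain ⟨ψ, hψ⟩ := exists_fourier_derivCLM_eq_one ha hb
  obtain ⟨C₁, hC₁⟩ := exists_enorm_sub_le_kernelOp (SchwartzMap.derivCLM ℂ ℂ ψ)
  obtain ⟨C₂, hC₂⟩ := exists_enorm_dyadicAverage_le_kernelOp ψ
  refine ⟨16 * C₁ + C₂, fun i f hf r hr m x => ?_⟩
  have hr0 : 0 ≤ r⁻¹ := inv_nonneg.mpr (by linarith)
  have hrep := schwartzConv_dyadicDilation_eq_self hψ hf
  have hf_meas : Measurable fun w => ‖f w‖ₑ := f.continuous.enorm.measurable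
  rw [dyadicError]
  split_ifs with him
  · rw [min_eq_right him]
    calc ‖f x - dyadicAverage m f x‖ₑ
        ≤ C₁ * ENNReal.ofReal (2 ^ (i - m)) *
            kernelOp volume (decayKernel i) (fun w => ‖f w‖ₑ) x :=
          enorm_sub_dyadicAverage_le f.continuous (hC₁ i m f him hrep x)
      _ ≤ C₁ * dyadicWeight (1 - r⁻¹) (m - i) *
            (16 * kernelOp volume (decayKernel i) (fun w => ‖f w‖ₑ ^ r) x ^ r⁻¹) := by
          gcongr
          · exact ofReal_two_zpow_le_dyadicWeight (by linarith) him
          · exact kernelOp_decayKernel_le_rpow_inv hr i hf_meas x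
      _ = ((16 * C₁ : ℝ≥0) : ℝ≥0∞) * (dyadicWeight (1 - r⁻¹) (m - i) *
            kernelOp volume (decayKernel i) (fun w => ‖f w‖ₑ ^ r) x ^ r⁻¹) := by
          push_cast
          ring
      _ ≤ _ := by
          gcongr
          exact le_self_add
  · have hmi := (not_le.mp him).le
    rw [min_eq_left hmi]
    refine (hC₂ i m f hmi hrep r hr x).trans ?_
    rw [ENNReal.mul_rpow_of_nonneg _ _ hr0, mul_assoc, ← mul_assoc (ENNReal.ofReal _),
      ofReal_two_zpow_mul_rpow_inv r hmi]
    gcongr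
    exact le_add_self

lemma tsum_dyadicWeight_ne_top {ε : ℝ} (hε : 0 < ε) : ∑' n : ℤ, dyadicWeight ε n ≠ ∞ := by
  have hgeom : Summable fun n : ℕ => ((2 : ℝ) ^ (-ε)) ^ n :=
    summable_geometric_of_lt_one (by positivity)
      (Real.rpow_lt_one_of_one_lt_of_neg one_lt_two (neg_lt_zero.mpr hε))
  have hreal (n : ℤ) : dyadicWeight ε n = ENNReal.ofReal (((2 : ℝ) ^ (-ε)) ^ n.natAbs) := by
    rw [dyadicWeight, ← Real.rpow_natCast, ← Real.rpow_mul zero_le_two,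
      ← ENNReal.ofReal_rpow_of_pos two_pos, ENNReal.ofReal_ofNat, Nat.cast_natAbs, Int.cast_abs,
      neg_mul]
  simp only [hreal]
  refine Summable.tsum_ofReal_ne_top (.of_nat_of_neg ?_ ?_)
  · simpa only [Int.natAbs_natCast] using hgeom
  · simpa only [Int.natAbs_neg, Int.natAbs_natCast] using hgeom

lemma sum_dyadicWeight_sub_left_le (ε : ℝ) (T : Finset ℤ) (m : ℤ) :
    ∑ i ∈ T, dyadicWeight ε (m - i) ≤ ∑' n : ℤ, dyadicWeight ε n :=
  (ENNReal.sum_le_tsum T).trans_eq ((Equiv.subLeft m).tsum_eq (dyadicWeight ε))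

lemma sum_dyadicWeight_sub_right_le (ε : ℝ) (T : Finset ℤ) (i : ℤ) :
    ∑ m ∈ T, dyadicWeight ε (m - i) ≤ ∑' n : ℤ, dyadicWeight ε n :=
  (ENNReal.sum_le_tsum T).trans_eq ((Equiv.subRight i).tsum_eq (dyadicWeight ε))

end DyadicError

section SquareFunction

lemma rpow_two_sum_mul_le {ι : Type*} (T : Finset ι) (w g : ι → ℝ≥0∞) :
    (∑ i ∈ T, w i * g i) ^ (2 : ℝ) ≤ (∑ i ∈ T, w i) * ∑ i ∈ T, w i * g i ^ (2 : ℝ) := by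
  have h := ENNReal.inner_le_weight_mul_Lp_of_nonneg T one_le_two w g
  rw [show 1 - (2 : ℝ)⁻¹ = 2⁻¹ by norm_num, ← ENNReal.mul_rpow_of_nonneg _ _ (by norm_num)] at h
  rwa [ENNReal.le_rpow_inv_iff two_pos] at h

lemma rpow_half_mul_rpow_two_div {r : ℝ} (hr : 0 < r) (c a : ℝ≥0∞) :
    (c ^ (r / 2) * a) ^ (2 / r) = c * (a ^ r⁻¹) ^ (2 : ℝ) := by
  rw [ENNReal.mul_rpow_of_nonneg _ _ (by positivity), ← ENNReal.rpow_mul, ← ENNReal.rpow_mul,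
    div_mul_div_cancel₀ two_ne_zero, div_self hr.ne', rpow_one, inv_mul_eq_div]

theorem IsMaximalKernelFamily.exists_lintegral_rpow_sum_sq_le {X κ α β : Type*}
    [MeasurableSpace X] {μ : Measure X} [SFinite μ] [Countable κ] {K : κ → X → X → ℝ≥0∞} {A : ℝ≥0}
    (hK : IsMaximalKernelFamily μ K A) {p r : ℝ} (hr : 1 ≤ r) (hr2 : r < 2) (hrp : r < p)
    (W : ℝ≥0) :
    ∃ C : ℝ≥0, ∀ (S : Finset α) (T : Finset β) (k : α → β → κ) (w : α → β → ℝ≥0∞)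
      (g : β → X → ℝ≥0∞), (∀ m, ∑ i ∈ T, w m i ≤ W) → (∀ i, ∑ m ∈ S, w m i ≤ W) →
      (∀ m i, w m i ≠ ∞) → (∀ i, Measurable (g i)) →
      ∫⁻ x, (∑ m ∈ S, (∑ i ∈ T, w m i *
          kernelOp μ (K (k m i)) (fun y => g i y ^ r) x ^ r⁻¹) ^ (2 : ℝ)) ^ (p / 2) ∂μ ≤
        C * ∫⁻ x, (∑ i ∈ T, g i x ^ (2 : ℝ)) ^ (p / 2) ∂μ := by
  have hr0 : 0 < r := by linarith
  have hp0 : 0 < p / 2 := by linarith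
  obtain ⟨C, hC⟩ := hK.exists_lintegral_rpow_sum_kernelOp_le (ι := α × β) (s := 2 / r) (q := p / r)
    ((one_lt_div hr0).mpr hr2) ((one_lt_div hr0).mpr hrp)
  refine ⟨W ^ (p / 2) * C * W ^ (p / 2), fun S T k w g hT hS hw hg => ?_⟩
  have hscale : p / r / (2 / r) = p / 2 := by field_simp
  set h : α × β → X → ℝ≥0∞ := fun z y => w z.1 z.2 ^ (r / 2) * g z.2 y ^ r
  have hterm (m : α) (i : β) (x : X) : kernelOp μ (K (k m i)) (h (m, i)) x ^ (2 / r) =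
      w m i * (kernelOp μ (K (k m i)) (fun y => g i y ^ r) x ^ r⁻¹) ^ (2 : ℝ) := by
    rw [kernelOp_const_mul (rpow_ne_top_of_nonneg (by positivity) (hw _ _)),
      rpow_half_mul_rpow_two_div hr0]
  have hcoe : ((W ^ (p / 2) : ℝ≥0) : ℝ≥0∞) = (W : ℝ≥0∞) ^ (p / 2) :=
    ENNReal.coe_rpow_of_nonneg _ hp0.le
  calc _ ≤ ∫⁻ x, (W : ℝ≥0∞) ^ (p / 2) * (∑ z ∈ S ×ˢ T,
        kernelOp μ (K (k z.1 z.2)) (h z) x ^ (2 / r)) ^ (p / 2) ∂μ := by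
        refine lintegral_mono fun x => ?_
        rw [← ENNReal.mul_rpow_of_nonneg _ _ hp0.le, Finset.sum_product, Finset.mul_sum]
        simp only [hterm]
        refine ENNReal.rpow_le_rpow (Finset.sum_le_sum fun m _ => ?_) hp0.le
        exact (rpow_two_sum_mul_le _ _ _).trans (mul_le_mul_left (hT m) _)
    _ ≤ (W : ℝ≥0∞) ^ (p / 2) * (C * ∫⁻ x, (∑ z ∈ S ×ˢ T, h z x ^ (2 / r)) ^ (p / 2) ∂μ) := by
        rw [lintegral_const_mul' _ _ (by finiteness)]
        gcongr
        simpa only [hscale] using hC (S ×ˢ T) (fun z => k z.1 z.2) h fun z =>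
          ((hg z.2).pow_const r).const_mul _
    _ ≤ (W : ℝ≥0∞) ^ (p / 2) * (C * ∫⁻ x, (W : ℝ≥0∞) ^ (p / 2) *
          (∑ i ∈ T, g i x ^ (2 : ℝ)) ^ (p / 2) ∂μ) := by
        refine mul_le_mul_right (mul_le_mul_right (lintegral_mono fun x => ?_) _) _
        rw [← ENNReal.mul_rpow_of_nonneg _ _ hp0.le, Finset.sum_product_right, Finset.mul_sum]
        refine ENNReal.rpow_le_rpow (Finset.sum_le_sum fun i _ => ?_) hp0.le
        simp only [h, rpow_half_mul_rpow_two_div hr0, ENNReal.rpow_rpow_inv hr0.ne',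
          ← Finset.sum_mul]
        exact mul_le_mul_left (hS i) _
    _ = _ := by
        rw [lintegral_const_mul' _ _ (by finiteness)]
        push_cast [hcoe]
        ring

theorem exists_lintegral_rpow_sum_dyadicError_le {p a b : ℝ} (hp : 1 < p) (ha : 0 < a)
    (hb : 0 < b) :
    ∃ C : ℝ≥0, ∀ f : ℤ → SchwartzMap ℝ ℂ,
      (∀ i ξ, 𝓕 (f i) ξ ≠ 0 → 2 ^ i * a < |ξ| ∧ |ξ| < 2 ^ i * b) → ∀ S T : Finset ℤ,
      ∫⁻ x, (∑ m ∈ S, (∑ i ∈ T, dyadicError m i (f i) x) ^ (2 : ℝ)) ^ (p / 2) ≤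
        C * ∫⁻ x, (∑ i ∈ T, ‖f i x‖ₑ ^ (2 : ℝ)) ^ (p / 2) := by
  obtain ⟨r, hr1, hr⟩ := exists_between (lt_min _root_.one_lt_two hp)
  obtain ⟨hr2, hrp⟩ := lt_min_iff.mp hr
  have hε : 0 < 1 - r⁻¹ := sub_pos.mpr (inv_lt_one_of_one_lt₀ hr1)
  have hp0 : 0 < p / 2 := by linarith
  obtain ⟨c, hc⟩ := exists_dyadicError_le a b ha hb
  have hW := coe_toNNReal (tsum_dyadicWeight_ne_top hε)
  set W := (∑' n : ℤ, dyadicWeight (1 - r⁻¹) n).toNNReal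
  obtain ⟨C, hC⟩ := isMaximalKernelFamily_decayKernel.exists_lintegral_rpow_sum_sq_le
    (α := ℤ) (β := ℤ) hr1.le hr2 hrp W
  refine ⟨(c ^ (2 : ℝ)) ^ (p / 2) * C, fun f hf S T => ?_⟩
  have hcoe : (((c ^ (2 : ℝ)) ^ (p / 2) : ℝ≥0) : ℝ≥0∞) = ((c : ℝ≥0∞) ^ (2 : ℝ)) ^ (p / 2) := by
    rw [ENNReal.coe_rpow_of_nonneg _ hp0.le, ENNReal.coe_rpow_of_nonneg _ zero_le_two]
  rw [coe_mul, hcoe, mul_assoc]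
  refine le_trans ?_ (mul_le_mul_right (hC S T (fun m i => min m i)
    (fun m i => dyadicWeight (1 - r⁻¹) (m - i)) (fun i y => ‖f i y‖ₑ)
    (fun m => hW ▸ sum_dyadicWeight_sub_left_le _ T m)
    (fun i => hW ▸ sum_dyadicWeight_sub_right_le _ S i)
    (fun m i => ?_) fun i => (f i).continuous.measurable.enorm) _)
  · rw [← lintegral_const_mul' _ _ (by finiteness)]
    refine lintegral_mono fun x => ?_
    rw [← ENNReal.mul_rpow_of_nonneg _ _ hp0.le, Finset.mul_sum]
    refine ENNReal.rpow_le_rpow (Finset.sum_le_sum fun m _ => ?_) hp0.le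
    rw [← ENNReal.mul_rpow_of_nonneg _ _ zero_le_two, Finset.mul_sum]
    refine ENNReal.rpow_le_rpow (Finset.sum_le_sum fun i _ => ?_) zero_le_two
    exact hc i (f i) (hf i) r hr1.le m x
  · exact ne_top_of_le_ne_top (tsum_dyadicWeight_ne_top hε) (ENNReal.le_tsum _)

end SquareFunction

section Transference

variable {E : Type*} [NormedAddCommGroup E] {N : ℕ → ℤ} {J : Finset ℕ} {a b : ℤ} {n : ℕ}

lemma sum_comp_le_sum_Icc (hN : Monotone N) (hJ : ∀ k ∈ J, a ≤ N k ∧ N k < N (k + 1) ∧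
      N (k + 1) ≤ b) {g : ℤ → ℝ} (hg : ∀ m, 0 ≤ g m) :
    ∑ k ∈ J, g (N k) ≤ ∑ m ∈ Finset.Icc a b, g m := by
  have hmono : StrictMonoOn N J := fun k hk l _ hkl => (hJ k hk).2.1.trans_le (hN hkl)
  rw [← Finset.sum_image hmono.injOn]
  refine Finset.sum_le_sum_of_subset_of_nonneg (Finset.image_subset_iff.mpr fun k hk => ?_)
    fun m _ _ => hg m
  have := hJ k hk
  exact Finset.mem_Icc.mpr ⟨this.1, by lia⟩

lemma sum_comp_succ_le_sum_Icc (hN : Monotone N) (hJ : ∀ k ∈ J, a ≤ N k ∧ N k < N (k + 1) ∧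
      N (k + 1) ≤ b) {g : ℤ → ℝ} (hg : ∀ m, 0 ≤ g m) :
    ∑ k ∈ J, g (N (k + 1)) ≤ ∑ m ∈ Finset.Icc a b, g m := by
  have hmono : StrictMonoOn (fun k => N (k + 1)) J :=
    fun k _ l hl hkl => (hN hkl).trans_lt (hJ l hl).2.1
  rw [← Finset.sum_image (f := g) hmono.injOn]
  refine Finset.sum_le_sum_of_subset_of_nonneg (Finset.image_subset_iff.mpr fun k hk => ?_)
    fun m _ _ => hg m
  have := hJ k hk
  exact Finset.mem_Icc.mpr ⟨by lia, this.2.2⟩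

lemma sq_mul_card_jumps_le_greedyEnergy_sub (hN : Monotone N) {θ : ℝ} (hθ : 0 ≤ θ) {M : ℤ → E}
    (hJ : ∀ k ∈ J, a ≤ N k ∧ N (k + 1) ≤ a + n ∧ 2 * θ < ‖M (N (k + 1)) - M (N k)‖) :
    θ ^ 2 * J.card ≤ greedyEnergy θ (fun j => M (a + j + 1) - M (a + j)) n := by
  refine sq_mul_card_jumps_le_greedyEnergy hθ (t := fun k => min n (N k - a).toNat)
    (fun k l hkl => ?_) (fun k => min_le_left _ _) fun k hk => ?_
  · have := hN hkl
    dsimp only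
    lia
  · obtain ⟨ha, hb, hlt⟩ := hJ k hk
    have hmono := hN k.le_succ
    have htel := Finset.sum_Ico_sub (fun j : ℕ => M (a + j))
      (show min n (N k - a).toNat ≤ min n (N (k + 1) - a).toNat by lia)
    simp only [Nat.cast_succ, ← add_assoc] at htel
    rwa [htel, show a + (min n (N (k + 1) - a).toNat : ℕ) = N (k + 1) by lia,
      show a + (min n (N k - a).toNat : ℕ) = N k by lia]

/-- A jump of `A` of size `λ` is a jump of `M` of size `λ / 3`, or `A` and `M` differ by at least
`λ / 3` at one of its end points. -/
theorem sq_mul_card_jumps_le_greedyEnergy_add (hN : Monotone N) {lam : ℝ} (hlam : 0 ≤ lam)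
    (A M : ℤ → E)
    (hJ : ∀ k ∈ J, a ≤ N k ∧ N (k + 1) ≤ a + n ∧ lam < ‖A (N (k + 1)) - A (N k)‖) :
    lam ^ 2 * J.card ≤ 36 * greedyEnergy (lam / 6) (fun j => M (a + j + 1) - M (a + j)) n +
      9 * ∑ m ∈ Finset.Icc a (a + n), ‖A m - M m‖ ^ 2 := by
  let P (k : ℕ) : Prop := lam / 3 < ‖M (N (k + 1)) - M (N k)‖
  have hjump : (lam / 6) ^ 2 * (J.filter P).card ≤
      greedyEnergy (lam / 6) (fun j => M (a + j + 1) - M (a + j)) n := by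
    refine sq_mul_card_jumps_le_greedyEnergy_sub hN (by positivity) fun k hk => ?_
    obtain ⟨hk, hPk⟩ := Finset.mem_filter.mp hk
    refine ⟨(hJ k hk).1, (hJ k hk).2.1, ?_⟩
    rwa [show 2 * (lam / 6) = lam / 3 by ring]
  have hfar (k : ℕ) (hk : k ∈ J.filter fun k => ¬ P k) : lam ^ 2 ≤
      9 / 2 * (‖A (N k) - M (N k)‖ ^ 2 + ‖A (N (k + 1)) - M (N (k + 1))‖ ^ 2) := by
    obtain ⟨hk, hPk⟩ := Finset.mem_filter.mp hk
    have hlt := (hJ k hk).2.2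
    have htri := dist_triangle4 (A (N (k + 1))) (M (N (k + 1))) (M (N k)) (A (N k))
    rw [dist_comm (M (N k)) (A (N k))] at htri
    simp only [dist_eq_norm] at htri
    have hle : ‖M (N (k + 1)) - M (N k)‖ ≤ lam / 3 := not_lt.mp hPk
    nlinarith [hle, sq_nonneg (‖A (N k) - M (N k)‖ - ‖A (N (k + 1)) - M (N (k + 1))‖)]
  have hlt (k : ℕ) (hk : k ∈ J.filter fun k => ¬ P k) :
      a ≤ N k ∧ N k < N (k + 1) ∧ N (k + 1) ≤ a + n := by
    obtain ⟨ha, hb, hlt⟩ := hJ k (Finset.mem_filter.mp hk).1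
    refine ⟨ha, (hN k.le_succ).lt_of_ne fun heq => ?_, hb⟩
    rw [← Nat.succ_eq_add_one, ← heq, sub_self, norm_zero] at hlt
    linarith
  have hg (m : ℤ) : 0 ≤ ‖A m - M m‖ ^ 2 := by positivity
  have hclose : (J.filter fun k => ¬ P k).card * lam ^ 2 ≤
      9 * ∑ m ∈ Finset.Icc a (a + n), ‖A m - M m‖ ^ 2 := by
    rw [← nsmul_eq_mul]
    refine (Finset.card_nsmul_le_sum _ _ _ hfar).trans ?_
    rw [← Finset.mul_sum, Finset.sum_add_distrib]
    linarith [sum_comp_le_sum_Icc hN hlt hg, sum_comp_succ_le_sum_Icc hN hlt hg]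
  rw [← Finset.card_filter_add_card_filter_not P]
  push_cast
  linarith

lemma sum_sq_norm_sub_le (A M : ℤ → E) :
    ∑ j ∈ Finset.range n, ‖M (a + j + 1) - M (a + j)‖ ^ 2 ≤
      6 * ∑ m ∈ Finset.Icc a (a + n), ‖A m - M m‖ ^ 2 +
        3 * ∑ j ∈ Finset.range n, ‖A (a + j + 1) - A (a + j)‖ ^ 2 := by
  have hg (m : ℤ) : 0 ≤ ‖A m - M m‖ ^ 2 := by positivity
  have hterm (j : ℕ) : ‖M (a + j + 1) - M (a + j)‖ ^ 2 ≤
      3 * ‖A (a + j) - M (a + j)‖ ^ 2 + 3 * ‖A (a + j + 1) - M (a + j + 1)‖ ^ 2 +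
        3 * ‖A (a + j + 1) - A (a + j)‖ ^ 2 := by
    have htri := dist_triangle4 (M (a + j + 1)) (A (a + j + 1)) (A (a + j)) (M (a + j))
    rw [dist_comm (M (a + j + 1)) (A (a + j + 1))] at htri
    simp only [dist_eq_norm] at htri
    refine (pow_le_pow_left₀ (norm_nonneg _) htri 2).trans ?_
    nlinarith [sq_nonneg (‖A (a + j) - M (a + j)‖ - ‖A (a + j + 1) - M (a + j + 1)‖),
      sq_nonneg (‖A (a + j) - M (a + j)‖ - ‖A (a + j + 1) - A (a + j)‖),
      sq_nonneg (‖A (a + j + 1) - M (a + j + 1)‖ - ‖A (a + j + 1) - A (a + j)‖)]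
  have hmono : Monotone fun j : ℕ => a + j := fun i j hij => by dsimp only; lia
  have hJ (j : ℕ) (hj : j ∈ Finset.range n) :
      a ≤ a + j ∧ a + j < a + (j + 1 : ℕ) ∧ a + (j + 1 : ℕ) ≤ a + n := by
    have := Finset.mem_range.mp hj
    lia
  have hleft := sum_comp_le_sum_Icc hmono hJ hg
  have hright := sum_comp_succ_le_sum_Icc hmono hJ hg
  simp only [Nat.cast_succ, ← add_assoc] at hright
  refine (Finset.sum_le_sum fun j _ => hterm j).trans ?_
  rw [Finset.sum_add_distrib, Finset.sum_add_distrib, ← Finset.mul_sum, ← Finset.mul_sum,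
    ← Finset.mul_sum]
  linarith

end Transference

section DyadicIncrement

variable {E : Type*} [NormedAddCommGroup E] {F : ℝ → E} {a : ℤ}

/-- The martingale difference `j` of the dyadic averages of `F`, started at level `a`. -/
def dyadicIncrement [NormedSpace ℝ E] (a : ℤ) (F : ℝ → E) (j : ℕ) (x : ℝ) : E :=
  dyadicAverage (a + j + 1) F x - dyadicAverage (a + j) F x

lemma measurable_dyadicIncrement [NormedSpace ℝ E] [MeasurableSpace E] [BorelSpace E]
    [SecondCountableTopology E] (a : ℤ) (F : ℝ → E) (j : ℕ) :
    Measurable (dyadicIncrement a F j) :=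
  (measurable_dyadicAverage _ F).sub (measurable_dyadicAverage _ F)

lemma dyadicIncrement_halfSwap_of_lt [NormedSpace ℝ E] {i n : ℕ} (hin : i < n) (x : ℝ) :
    dyadicIncrement a F i (halfSwap (a + n) x) = dyadicIncrement a F i x := by
  rw [dyadicIncrement, dyadicAverage_halfSwap (by lia), dyadicAverage_halfSwap (by lia),
    dyadicIncrement]

lemma dyadicIncrement_halfSwap_self [NormedSpace ℝ E] (hF : Continuous F) (n : ℕ) (x : ℝ) :
    dyadicIncrement a F n (halfSwap (a + n) x) = -dyadicIncrement a F n x := by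
  rw [dyadicIncrement, dyadicAverage_halfSwap le_rfl,
    eq_sub_of_add_eq (dyadicAverage_succ_halfSwap_add (a + n) hF x), two_smul, dyadicIncrement]
  abel

lemma isFlipEnergy_greedyEnergy_dyadicIncrement [InnerProductSpace ℝ E] [MeasurableSpace E]
    [BorelSpace E] [SecondCountableTopology E] (hF : Continuous F) (θ : ℝ) (a : ℤ) :
    IsFlipEnergy volume (fun n => halfSwap (a + n))
      (fun n x => greedyEnergy θ (fun j => dyadicIncrement a F j x) n)
      (fun n x => ‖dyadicIncrement a F n x‖ ^ 2) where
  measurePreserving n := measurePreserving_halfSwap _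
  measurable n := measurable_greedyEnergy (measurable_dyadicIncrement a F) n
  nonneg n x := greedyEnergy_nonneg n
  zero x := greedyEnergy_zero
  measurable_step n := (measurable_dyadicIncrement a F n).norm.pow_const 2
  step_nonneg n x := by positivity
  step_flip {i n} hin x := by
    rcases hin.lt_or_eq with hlt | rfl
    · rw [dyadicIncrement_halfSwap_of_lt hlt]
    · rw [dyadicIncrement_halfSwap_self hF, norm_neg]
  exists_flip n x := exists_greedyEnergy_flip
    (fun i hi => dyadicIncrement_halfSwap_of_lt hi x) (dyadicIncrement_halfSwap_self hF n x)

end DyadicIncrement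

section JumpControl

lemma lintegral_rpow_le_of_le_mul_add {X : Type*} [MeasurableSpace X] {μ : Measure X} {q : ℝ}
    (hq : 0 < q) {c : ℝ≥0∞} (hc : c ≠ ∞) {u v w : X → ℝ≥0∞} (hu : Measurable u)
    (h : ∀ x, w x ≤ c * (u x + v x)) :
    ∫⁻ x, w x ^ q ∂μ ≤ (2 * c) ^ q * (∫⁻ x, u x ^ q ∂μ + ∫⁻ x, v x ^ q ∂μ) := by
  rw [← lintegral_add_left (hu.pow_const q), ← lintegral_const_mul' _ _ (by finiteness)]
  refine lintegral_mono fun x => (ENNReal.rpow_le_rpow (h x) hq.le).trans ?_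
  have hsum : (u x + v x) ^ q ≤ 2 ^ q * (u x ^ q + v x ^ q) := by
    simpa using rpow_sum_le_card_rpow_mul_sum_rpow Finset.univ ![u x, v x] hq
  rw [ENNReal.mul_rpow_of_nonneg _ _ hq.le, ENNReal.mul_rpow_of_nonneg _ _ hq.le,
    mul_comm (2 ^ q : ℝ≥0∞), mul_assoc]
  gcongr

lemma measurable_dyadicError (m i : ℤ) {f : ℝ → ℂ} (hf : Continuous f) :
    Measurable (dyadicError m i f) := by
  unfold dyadicError
  split_ifs
  · exact (hf.measurable.sub (measurable_dyadicAverage m f)).enorm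
  · exact (measurable_dyadicAverage m f).enorm

lemma enorm_sum_sub_dyadicAverage_le {f : ℤ → ℝ → ℂ} (hf : ∀ i, Continuous (f i)) {a b m : ℤ}
    (hm : m ≤ b) (x : ℝ) :
    ‖∑ i ∈ Finset.Ioc a m, f i x - dyadicAverage m (fun y => ∑ i ∈ Finset.Ioc a b, f i y) x‖ₑ ≤
      ∑ i ∈ Finset.Ioc a b, dyadicError m i (f i) x := by
  have hfilter : Finset.Ioc a m = (Finset.Ioc a b).filter (· ≤ m) := by
    ext i
    simp only [Finset.mem_Ioc, Finset.mem_filter]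
    lia
  rw [dyadicAverage_finsetSum _ fun i _ => hf i, hfilter, Finset.sum_filter,
    ← Finset.sum_sub_distrib]
  refine (enorm_sum_le _ _).trans (Finset.sum_le_sum fun i _ => ?_)
  unfold dyadicError
  split_ifs <;> simp

lemma sum_Ioc_sub_sum_Ioc {E : Type*} [AddCommGroup E] {a b c : ℤ} (hab : a ≤ b) (hbc : b ≤ c)
    (g : ℤ → E) :
    ∑ i ∈ Finset.Ioc a c, g i - ∑ i ∈ Finset.Ioc a b, g i = ∑ i ∈ Finset.Ioc b c, g i := by
  rw [← Finset.Ioc_union_Ioc_eq_Ioc hab hbc,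
    Finset.sum_union (Finset.Ioc_disjoint_Ioc_of_le le_rfl), add_sub_cancel_left]

lemma ofReal_sq_norm {E : Type*} [NormedAddCommGroup E] (z : E) :
    ENNReal.ofReal (‖z‖ ^ 2) = ‖z‖ₑ ^ (2 : ℝ) := by
  rw [ENNReal.ofReal_pow (norm_nonneg z), ofReal_norm, rpow_two]

/-- The square function of the differences between the partial sums of `f` and the dyadic averages
of the whole sum, over the levels `a, …, a + n`. -/
def dyadicSquareError (f : ℤ → ℝ → ℂ) (a : ℤ) (n : ℕ) (x : ℝ) : ℝ≥0∞ :=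
  ∑ m ∈ Finset.Icc a (a + n), (∑ i ∈ Finset.Ioc a (a + n), dyadicError m i (f i) x) ^ (2 : ℝ)

/-- The measurable majorant of `λ ^ 2` times the number of `λ`-jumps of the partial sums of `f`
between the levels `a` and `a + n`: the greedy jump energy of the dyadic martingale of the whole
sum, plus the square function of the error of approximation. -/
def jumpControl (f : ℤ → ℝ → ℂ) (lam : ℝ) (a : ℤ) (n : ℕ) (x : ℝ) : ℝ≥0∞ :=
  36 * (dyadicSquareError f a n x + ENNReal.ofReal (greedyEnergy (lam / 6) (fun j =>
    dyadicIncrement a (fun y => ∑ i ∈ Finset.Ioc a (a + n), f i y) j x) n))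

variable {f : ℤ → ℝ → ℂ}

lemma measurable_dyadicSquareError (hf : ∀ i, Continuous (f i)) (a : ℤ) (n : ℕ) :
    Measurable (dyadicSquareError f a n) :=
  Finset.measurable_fun_sum _ fun _ _ => (Finset.measurable_fun_sum _ fun i _ =>
    measurable_dyadicError _ i (hf i)).pow_const 2

lemma measurable_jumpControl (hf : ∀ i, Continuous (f i)) (lam : ℝ) (a : ℤ) (n : ℕ) :
    Measurable (jumpControl f lam a n) :=
  ((measurable_dyadicSquareError hf a n).add (measurable_greedyEnergy
    (measurable_dyadicIncrement a _) n).ennreal_ofReal).const_mul _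

lemma ofReal_sum_sq_norm_sub_dyadicAverage_le (hf : ∀ i, Continuous (f i)) (a : ℤ) (n : ℕ)
    (x : ℝ) :
    ENNReal.ofReal (∑ m ∈ Finset.Icc a (a + n), ‖∑ i ∈ Finset.Ioc a m, f i x -
      dyadicAverage m (fun y => ∑ i ∈ Finset.Ioc a (a + n), f i y) x‖ ^ 2) ≤
        dyadicSquareError f a n x := by
  rw [ENNReal.ofReal_sum_of_nonneg fun _ _ => by positivity]
  refine Finset.sum_le_sum fun m hm => ?_
  rw [ofReal_sq_norm]
  gcongr
  exact enorm_sum_sub_dyadicAverage_le hf (Finset.mem_Icc.mp hm).2 x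

theorem ofReal_sq_mul_card_jumps_le_jumpControl (hf : ∀ i, Continuous (f i)) {lam : ℝ}
    (hlam : 0 ≤ lam) {a : ℤ} {n : ℕ} {x : ℝ} {N : ℕ → ℤ} (hN : Monotone N) {J : Finset ℕ}
    (hJ : ∀ k ∈ J, a ≤ N k ∧ N (k + 1) ≤ a + n ∧
      lam < ‖∑ i ∈ Finset.Ioc (N k) (N (k + 1)), f i x‖) :
    ENNReal.ofReal (lam ^ 2) * J.card ≤ jumpControl f lam a n x := by
  set F : ℝ → ℂ := fun y => ∑ i ∈ Finset.Ioc a (a + n), f i y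
  have hcard := sq_mul_card_jumps_le_greedyEnergy_add hN hlam
    (fun m => ∑ i ∈ Finset.Ioc a m, f i x) (fun m => dyadicAverage m F x) fun k hk => by
      rw [sum_Ioc_sub_sum_Ioc (hJ k hk).1 (hN k.le_succ)]
      exact hJ k hk
  calc ENNReal.ofReal (lam ^ 2) * J.card = ENNReal.ofReal (lam ^ 2 * J.card) := by
        rw [ENNReal.ofReal_mul (by positivity), ENNReal.ofReal_natCast]
    _ ≤ ENNReal.ofReal (36 * (∑ m ∈ Finset.Icc a (a + n), ‖∑ i ∈ Finset.Ioc a m, f i x -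
          dyadicAverage m F x‖ ^ 2 +
          greedyEnergy (lam / 6) (fun j => dyadicIncrement a F j x) n)) := by
        refine ENNReal.ofReal_le_ofReal (hcard.trans ?_)
        have : 0 ≤ ∑ m ∈ Finset.Icc a (a + n), ‖∑ i ∈ Finset.Ioc a m, f i x -
          dyadicAverage m F x‖ ^ 2 := by positivity
        simp only [dyadicIncrement]
        linarith
    _ ≤ _ := by
        rw [ENNReal.ofReal_mul (by norm_num), ENNReal.ofReal_ofNat, jumpControl,
          ENNReal.ofReal_add (by positivity) (greedyEnergy_nonneg n)]
        gcongr
        exact ofReal_sum_sq_norm_sub_dyadicAverage_le hf a n x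

lemma ofReal_sum_sq_norm_dyadicIncrement_le (hf : ∀ i, Continuous (f i)) (a : ℤ) (n : ℕ) (x : ℝ) :
    ENNReal.ofReal (∑ j ∈ Finset.range n, ‖dyadicIncrement a
      (fun y => ∑ i ∈ Finset.Ioc a (a + n), f i y) j x‖ ^ 2) ≤
        6 * (dyadicSquareError f a n x + ∑' i, ‖f i x‖ₑ ^ (2 : ℝ)) := by
  set F : ℝ → ℂ := fun y => ∑ i ∈ Finset.Ioc a (a + n), f i y
  set A : ℤ → ℂ := fun m => ∑ i ∈ Finset.Ioc a m, f i x
  have hA (j : ℕ) : A (a + j + 1) - A (a + j) = f (a + j + 1) x := by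
    simp only [A]
    rw [sum_Ioc_sub_sum_Ioc (by lia) (by lia), show Finset.Ioc (a + j) (a + j + 1) =
      {a + (j : ℤ) + 1} by ext; simp only [Finset.mem_Ioc, Finset.mem_singleton]; lia,
      Finset.sum_singleton]
  have hdiff : ENNReal.ofReal (∑ j ∈ Finset.range n, ‖A (a + j + 1) - A (a + j)‖ ^ 2) ≤
      ∑' i, ‖f i x‖ₑ ^ (2 : ℝ) := by
    rw [ENNReal.ofReal_sum_of_nonneg fun _ _ => by positivity]
    simp only [hA, ofReal_sq_norm]
    exact (ENNReal.sum_le_tsum _).trans (ENNReal.tsum_comp_le_tsum_of_injective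
      (f := fun j : ℕ => a + j + 1) (fun i j hij => by dsimp only at hij; lia)
      fun i => ‖f i x‖ₑ ^ (2 : ℝ))
  refine (ENNReal.ofReal_le_ofReal (sum_sq_norm_sub_le A fun m => dyadicAverage m F x)).trans ?_
  rw [ENNReal.ofReal_add (by positivity) (by positivity), ENNReal.ofReal_mul (by norm_num),
    ENNReal.ofReal_mul (by norm_num), ENNReal.ofReal_ofNat, ENNReal.ofReal_ofNat, mul_add]
  gcongr
  · exact ofReal_sum_sq_norm_sub_dyadicAverage_le hf a n x
  · norm_num

theorem exists_lintegral_jumpControl_rpow_le {p b c : ℝ} (hp : 1 < p) (hb : 0 < b) (hc : 0 < c) :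
    ∃ C : ℝ≥0, ∀ f : ℤ → SchwartzMap ℝ ℂ,
      (∀ i ξ, 𝓕 (f i) ξ ≠ 0 → 2 ^ i * b < |ξ| ∧ |ξ| < 2 ^ i * c) → ∀ (lam : ℝ) (a : ℤ) (n : ℕ),
      ∫⁻ x, jumpControl (fun i => f i) lam a n x ^ (p / 2) ≤
        C * ∫⁻ x, (∑' i, ‖f i x‖ₑ ^ (2 : ℝ)) ^ (p / 2) := by
  have hq : 0 < p / 2 := by linarith
  obtain ⟨C₁, hC₁⟩ := exists_lintegral_rpow_sum_dyadicError_le hp hb hc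
  obtain ⟨C₂, hC₂⟩ := IsFlipEnergy.exists_lintegral_rpow_le (volume : Measure ℝ) hq
  refine ⟨72 ^ (p / 2) * (C₁ + C₂ * (12 ^ (p / 2) * (C₁ + 1))), fun f hf lam a n => ?_⟩
  have hcont (i : ℤ) : Continuous (f i) := (f i).continuous
  have hmeas := measurable_dyadicSquareError hcont a n
  set R := ∫⁻ x, (∑' i, ‖f i x‖ₑ ^ (2 : ℝ)) ^ (p / 2)
  have herr : ∫⁻ x, dyadicSquareError (fun i => f i) a n x ^ (p / 2) ≤ C₁ * R :=
    (hC₁ f hf _ _).trans (mul_le_mul_right (lintegral_mono fun x =>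
      ENNReal.rpow_le_rpow (ENNReal.sum_le_tsum _) hq.le) _)
  calc _ ≤ (2 * 36) ^ (p / 2) * ((∫⁻ x, dyadicSquareError (fun i => f i) a n x ^ (p / 2)) +
        ∫⁻ x, ENNReal.ofReal (greedyEnergy (lam / 6) (fun j => dyadicIncrement a
          (fun y => ∑ i ∈ Finset.Ioc a (a + n), f i y) j x) n) ^ (p / 2)) :=
        lintegral_rpow_le_of_le_mul_add hq ofNat_ne_top hmeas fun x => le_rfl
    _ ≤ (2 * 36) ^ (p / 2) * (C₁ * R + C₂ * ((2 * 6) ^ (p / 2) * (C₁ * R + R))) := by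
        refine mul_le_mul_right (add_le_add herr ?_) _
        refine (hC₂ _ _ _ (isFlipEnergy_greedyEnergy_dyadicIncrement
          (continuous_finsetSum _ fun i _ => hcont i) (lam / 6) a) n).trans ?_
        gcongr
        refine (lintegral_rpow_le_of_le_mul_add hq ofNat_ne_top hmeas
          (ofReal_sum_sq_norm_dyadicIncrement_le hcont a n)).trans ?_
        gcongr
    _ = _ := by
        rw [coe_mul, coe_add, coe_mul, coe_mul, coe_add, ENNReal.coe_rpow_of_nonneg _ hq.le,
          ENNReal.coe_rpow_of_nonneg _ hq.le, coe_one, coe_ofNat, coe_ofNat,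
          show (2 * 36 : ℝ≥0∞) = 72 by norm_num, show (2 * 6 : ℝ≥0∞) = 12 by norm_num]
        ring

end JumpControl

section JumpCount

lemma mul_encard_le_of_forall_finset {α : Type*} {K : Set α} {v X : ℝ≥0∞}
    (h : ∀ J : Finset α, ↑J ⊆ K → v * J.card ≤ X) : v * K.encard ≤ X := by
  rcases K.finite_or_infinite with hK | hK
  · rw [hK.encard_eq_coe_toFinset_card, ENat.toENNReal_coe]
    exact h _ (by simp)
  · rw [hK.encard_eq, ENat.toENNReal_top, ← ENNReal.iSup_natCast, ENNReal.mul_iSup]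
    refine iSup_le fun n => ?_
    obtain ⟨J, hJ, rfl⟩ := hK.exists_subset_card_eq n
    exact h J hJ

/-- The largest number of jumps greater than `lam` of the partial sums of `s` along a
nondecreasing sequence of indices. -/
def jumpCount {E : Type*} [NormedAddCommGroup E] (lam : ℝ) (s : ℤ → E) : ℝ≥0∞ :=
  ⨆ N : ℕ →o ℤ, ({k : ℕ | lam < ‖∑ i ∈ Finset.Ioc (N k) (N (k + 1)), s i‖}.encard : ℝ≥0∞)

lemma rpow_mul_jumpCount_le_liminf {f : ℤ → ℝ → ℂ} (hf : ∀ i, Continuous (f i)) {lam q : ℝ}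
    (hlam : 0 ≤ lam) (hq : 0 < q) (x : ℝ) :
    (ENNReal.ofReal (lam ^ 2) * jumpCount lam fun i => f i x) ^ q ≤
      Filter.liminf (fun L : ℕ => jumpControl f lam (-L) (2 * L) x ^ q) Filter.atTop := by
  rw [← ENNReal.le_rpow_inv_iff hq, jumpCount, ENNReal.mul_iSup]
  refine iSup_le fun N => mul_encard_le_of_forall_finset fun J hJ => ?_
  rw [ENNReal.le_rpow_inv_iff hq]
  refine Filter.le_liminf_of_le (by isBoundedDefault) ?_
  have hwindow : ∀ᶠ L : ℕ in Filter.atTop, ∀ k ∈ J, -(L : ℤ) ≤ N k ∧ N (k + 1) ≤ L :=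
    (Filter.eventually_all_finset J).mpr fun k _ =>
      (Filter.eventually_ge_atTop (max (N k).natAbs (N (k + 1)).natAbs)).mono fun L hL => by lia
  filter_upwards [hwindow] with L hL
  refine ENNReal.rpow_le_rpow (ofReal_sq_mul_card_jumps_le_jumpControl hf hlam N.monotone
    fun k hk => ⟨(hL k hk).1, ?_, hJ hk⟩) hq.le
  have := (hL k hk).2
  lia

theorem exists_lintegral_rpow_mul_jumpCount_le {p b c : ℝ} (hp : 1 < p) (hb : 0 < b)
    (hc : 0 < c) :
    ∃ C : ℝ≥0, ∀ f : ℤ → SchwartzMap ℝ ℂ,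
      (∀ i ξ, 𝓕 (f i) ξ ≠ 0 → 2 ^ i * b < |ξ| ∧ |ξ| < 2 ^ i * c) → ∀ lam : ℝ, 0 ≤ lam →
      ∫⁻ x, (ENNReal.ofReal (lam ^ 2) * jumpCount lam fun i => f i x) ^ (p / 2) ≤
        C * ∫⁻ x, (∑' i, ‖f i x‖ₑ ^ (2 : ℝ)) ^ (p / 2) := by
  obtain ⟨C, hC⟩ := exists_lintegral_jumpControl_rpow_le hp hb hc
  refine ⟨C, fun f hf lam hlam => ?_⟩
  have hcont (i : ℤ) : Continuous (f i) := (f i).continuous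
  calc _ ≤ ∫⁻ x, Filter.liminf
        (fun L : ℕ => jumpControl (fun i => f i) lam (-L) (2 * L) x ^ (p / 2)) Filter.atTop :=
        lintegral_mono fun x => rpow_mul_jumpCount_le_liminf hcont hlam (by linarith) x
    _ ≤ Filter.liminf (fun L : ℕ => ∫⁻ x, jumpControl (fun i => f i) lam (-L) (2 * L) x ^ (p / 2))
        Filter.atTop :=
        lintegral_liminf_le fun L => (measurable_jumpControl hcont lam _ _).pow_const _
    _ ≤ _ := Filter.liminf_le_of_le (by isBoundedDefault) fun R hR =>
        (hR.and (.of_forall fun L => hC f hf lam (-L) (2 * L))).exists.elim fun L hL =>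
          hL.1.trans hL.2

lemma IsContLPFamily.two_zpow_mul_lt_abs_and_abs_lt {Nb : ℝ} {f : ℤ → SchwartzMap ℝ ℂ}
    (hf : IsContLPFamily Nb f) (i : ℤ) (ξ : ℝ) (hξ : 𝓕 (f i) ξ ≠ 0) :
    2 ^ i * (2 : ℝ) ^ (-Nb) < |ξ| ∧ |ξ| < 2 ^ i * (2 : ℝ) ^ Nb := by
  rw [← Real.rpow_intCast, ← Real.rpow_add two_pos, ← Real.rpow_add two_pos]
  rw [SchwartzMap.fourier_coe] at hξ
  exact hf i ξ hξ

end JumpCount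

theorem continuous_weak_jump_inequality_general (p Nb : ℝ) (hp : 1 < p) :
    ∃ C : ℝ≥0, 0 < C ∧ ∀ f : ℤ → SchwartzMap ℝ ℂ, IsContLPFamily Nb f → ∀ lam : ℝ, 0 < lam →
      (∫⁻ x, (ENNReal.ofReal lam * (jumpCount lam fun i => f i x) ^ ((1 : ℝ) / 2)) ^ p) ^ (1 / p) ≤
        C * (∫⁻ x, ((∑' i : ℤ, ENNReal.ofReal ‖f i x‖ ^ (2 : ℝ)) ^ ((1 : ℝ) / 2)) ^ p) ^
          (1 / p) := by
  have hp0 : 0 ≤ 1 / p := by positivity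
  obtain ⟨C, hC⟩ := exists_lintegral_rpow_mul_jumpCount_le hp
    (Real.rpow_pos_of_pos two_pos (-Nb)) (Real.rpow_pos_of_pos two_pos Nb)
  refine ⟨C ^ (1 / p) + 1, by positivity, fun f hf lam hlam => ?_⟩
  have hsq (y : ℝ≥0∞) : (ENNReal.ofReal lam * y ^ ((1 : ℝ) / 2)) ^ p =
      (ENNReal.ofReal (lam ^ 2) * y) ^ (p / 2) := by
    rw [ENNReal.ofReal_pow hlam.le, ← rpow_two, ENNReal.mul_rpow_of_nonneg _ _ (by linarith),
      ENNReal.mul_rpow_of_nonneg _ _ (by linarith), ← ENNReal.rpow_mul, ← ENNReal.rpow_mul,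
      one_div_mul_eq_div, mul_div_cancel₀ _ two_ne_zero]
  have hhalf (y : ℝ≥0∞) : (y ^ ((1 : ℝ) / 2)) ^ p = y ^ (p / 2) := by
    rw [← ENNReal.rpow_mul, one_div_mul_eq_div]
  simp only [hsq, hhalf, ofReal_norm]
  refine (ENNReal.rpow_le_rpow (hC f hf.two_zpow_mul_lt_abs_and_abs_lt lam hlam.le) hp0).trans ?_
  rw [ENNReal.mul_rpow_of_nonneg _ _ hp0, coe_add, ENNReal.coe_rpow_of_nonneg _ hp0]
  gcongr
  exact le_self_add

/-- Weak-type (jump counting) variational inequality at `r = t = 2`, continuous case. -/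
theorem continuous_weak_jump_inequality
    (p Nb : ℝ) (hp : 1 < p) (hNb : 0 < Nb) :
    ∃ C : ℝ≥0, 0 < C ∧
      ∀ (f : ℤ → SchwartzMap ℝ ℂ), IsContLPFamily Nb f →
      ∀ (Nk : ℕ → ℝ → ℤ), IsJumpCollection Nk →
      ∀ lam : ℝ, 0 < lam →
      (∫⁻ x : ℝ,
          (ENNReal.ofReal lam *
            (({k : ℕ | lam <
                ‖∑ i ∈ Finset.Ioc (Nk k x) (Nk (k + 1) x), f i x‖}.encard : ℝ≥0∞))
              ^ ((1 : ℝ) / 2)) ^ p) ^ (1 / p)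
        ≤ (C : ℝ≥0∞) *
      (∫⁻ x : ℝ,
          ((∑' i : ℤ, (ENNReal.ofReal ‖f i x‖) ^ (2 : ℝ)) ^ ((1 : ℝ) / 2)) ^ p)
            ^ (1 / p) := by
  obtain ⟨C, hC0, hC⟩ := continuous_weak_jump_inequality_general p Nb hp
  refine ⟨C, hC0, fun f hf Nk hNk lam hlam => le_trans ?_ (hC f hf lam hlam)⟩
  gcongr with x
  exact le_iSup_of_le ⟨fun k => Nk k x, monotone_nat_of_le_succ fun k => hNk.2 k x⟩ le_rfl

end
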